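/- Let ρ > 0 and let (d_n) be a sequence of even integers with d_n ≥ 2 and (α_n) a sequence of reals with α_n ≥ sqrt(7/6), such that d_n/n → c₁ > 0, α_n/n → c₂ > 0 and α_n/d_n → 1/(2ρ) as n → ∞; set s'_n := t_{1,d_n}^{α_n,α_n}. Then for any sequence (x_n) with x_n ∈ [0, sqrt(1−q_{d_n,α_n})], x_n ≠ s'_n and n^{2/3}·|x_n − s'_n| → 0, one has (R_{d_n,α_n}(x_n) − R_{d_n,α_n}(s'_n)) / ((x_n − s'_n)·b_{d_n,α_n}(s'_n)) − T_{d_n,α_n}(s'_n) → 0 as n → ∞. -/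

import Mathlib

open MeasureTheory Filter Real

noncomputable section

/-- Generalized binomial coefficient `C(a, k)` for real `a`. -/
def genBinom (a : ℝ) (k : ℕ) : ℝ := (∏ i ∈ Finset.range k, (a - i)) / (Nat.factorial k : ℝ)

/-- The Jacobi polynomial `p_d^{α,β}`, via the standard explicit formula; it is the degree-`d`
polynomial orthogonal to lower degrees for the weight `(1-t)^α (1+t)^β` on `[-1,1]`,
normalized by `p_d^{α,β}(1) = Γ(d+α+1)/(Γ(α+1)Γ(d+1))`. -/
def jacobiP (α β : ℝ) (d : ℕ) (x : ℝ) : ℝ :=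
  ∑ s ∈ Finset.range (d + 1),
    genBinom ((d : ℝ) + α) (d - s) * genBinom ((d : ℝ) + β) s *
      ((x - 1) / 2) ^ s * ((x + 1) / 2) ^ (d - s)

/-- The largest root `t_{1,d}^{α,β}` of the Jacobi polynomial `p_d^{α,β}`. -/
def maxRoot (α β : ℝ) (d : ℕ) : ℝ := sSup {x : ℝ | jacobiP α β d x = 0}

/-- `q_{d,α} = (α² - 1)/((d+α)(d+α+1))`. -/
def qda (d : ℕ) (α : ℝ) : ℝ := (α ^ 2 - 1) / (((d : ℝ) + α) * ((d : ℝ) + α + 1))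

/-- The phase function `ω_{d,α}`. -/
def omegada (d : ℕ) (α : ℝ) (x : ℝ) : ℝ :=
  Real.sqrt (((d : ℝ) + α) * ((d : ℝ) + α + 1)) *
    (Real.arccos (Real.sqrt ((1 - qda d α - x ^ 2) / (1 - qda d α))) -
      Real.sqrt (qda d α) *
        Real.arccos (Real.sqrt ((1 - qda d α - x ^ 2) / ((1 - qda d α) * (1 - x ^ 2)))))

/-- `b_{d,α}(x) = sqrt(1 - q_{d,α} - x²)·sqrt((d+α)(d+α+1))/(1-x²)`. -/
def bda (d : ℕ) (α : ℝ) (x : ℝ) : ℝ :=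
  Real.sqrt (1 - qda d α - x ^ 2) * Real.sqrt (((d : ℝ) + α) * ((d : ℝ) + α + 1)) / (1 - x ^ 2)

/-- `f_{d,α}(x) = ((1 - q_{d,α} - x²)(d+α)(d+α+1))^{1/4}·(1-x²)^{α/2}·p_d^{α,α}(x)`. -/
def fda (d : ℕ) (α : ℝ) (x : ℝ) : ℝ :=
  ((1 - qda d α - x ^ 2) * (((d : ℝ) + α) * ((d : ℝ) + α + 1))) ^ ((1 : ℝ) / 4) *
    (1 - x ^ 2) ^ (α / 2) * jacobiP α α d x

/-- `ε_{d,α}(x)`. -/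
def epsda (d : ℕ) (α : ℝ) (x : ℝ) : ℝ :=
  -(x ^ 6 + 6 * qda d α * x ^ 4 - 3 * x ^ 2 + 4 * qda d α ^ 2 - 6 * qda d α + 2) /
    (4 * (((d : ℝ) + α) * ((d : ℝ) + α + 1)) * (1 - qda d α - x ^ 2) ^ 3)

/-- The remainder `R_{d,α}(x)`. -/
def Rda (d : ℕ) (α : ℝ) (x : ℝ) : ℝ :=
  (1 / fda d α 0) *
    ∫ t in (0 : ℝ)..x,
      epsda d α t * bda d α t * fda d α t * Real.sin (omegada d α x - omegada d α t)

/-- The auxiliary term `T_{d,α}(x)`. -/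
def Tda (d : ℕ) (α : ℝ) (x : ℝ) : ℝ :=
  (1 / fda d α 0) *
    ∫ t in (0 : ℝ)..x,
      epsda d α t * bda d α t * fda d α t * Real.cos (omegada d α x - omegada d α t)

/-!
Up to the Liouville-Green error `ε`, the function `u = (1 - x²) ^ ((α + 1) / 2) * p` solves
`u'' = -b² u`. In the phase variable `ω = ∫ b`, the function `f = √b * u` therefore satisfies
`d²f/dω² = -(1 + ε) f`, and Duhamel's formula gives `R = cos ω - f / f(0)` and
`T = -sin ω - (df/dω) / f(0)`. Hence `R' = b T` and `T' = b (ε f / f(0) - R)`, and the claim is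
Taylor's theorem for `R` at the largest root `s`, once `R''` is controlled.

With `ν = √((d + α)(d + α + 1))` and `r = √(1 - q - x²)`, an energy estimate bounds `f / f(0)`, `R`
and `T` as long as `ν r³` is bounded below, and there `R'' = O(ν / r)`, while `b ≥ ν r`; so the
error is `O(|x - s| / r(s)²)`. On the other hand `u` has a maximum between `s` and the turning point
`√(1 - q)`, which is not possible if they are too close: this gives `q² (1 - q) ≤ ν² r(s)⁶`. Thus
`r(s)²` is at least of order `ν ^ (-2 / 3)`, and the error is `O(n ^ (2 / 3) |x - s|)`.
-/

open Polynomial Set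
open scoped Interval Topology

section Analysis

theorem norm_sub_sub_smul_le_of_norm_hasDerivAt_le {E : Type*} [NormedAddCommGroup E]
    [NormedSpace ℝ E] {f f' f'' : ℝ → E} {s x M : ℝ}
    (hf : ∀ t ∈ [[s, x]], HasDerivAt f (f' t) t) (hf' : ∀ t ∈ [[s, x]], HasDerivAt f' (f'' t) t)
    (hM : ∀ t ∈ [[s, x]], ‖f'' t‖ ≤ M) :
    ‖f x - f s - (x - s) • f' s‖ ≤ M * |x - s| ^ 2 := by
  have hM0 : 0 ≤ M := (norm_nonneg _).trans (hM s left_mem_uIcc)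
  have hlip : ∀ t ∈ [[s, x]], ‖f' t - f' s‖ ≤ M * |x - s| := fun t ht =>
    ((convex_uIcc s x).norm_image_sub_le_of_norm_hasDerivWithin_le
      (fun y hy => (hf' y hy).hasDerivWithinAt) hM left_mem_uIcc ht).trans
      (mul_le_mul_of_nonneg_left (abs_sub_left_of_mem_uIcc ht) hM0)
  have hderiv : ∀ t ∈ [[s, x]],
      HasDerivWithinAt (fun y => f y - (y - s) • f' s) (f' t - f' s) [[s, x]] t := fun t ht => by
    simpa using ((hf t ht).fun_sub
      (((hasDerivAt_id t).sub_const s).smul_const (f' s))).hasDerivWithinAt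
  have h := (convex_uIcc s x).norm_image_sub_le_of_norm_hasDerivWithin_le hderiv hlip
    left_mem_uIcc right_mem_uIcc
  rw [sub_self, zero_smul, sub_zero, Real.norm_eq_abs] at h
  calc ‖f x - f s - (x - s) • f' s‖ = ‖f x - (x - s) • f' s - f s‖ := by rw [sub_right_comm]
    _ ≤ M * |x - s| * |x - s| := h
    _ = M * |x - s| ^ 2 := by ring

variable {u u' Q : ℝ → ℝ} {z m a c M : ℝ}

/- Beyond `a` the equation `u'' = -Q u` makes the positive solution `u` convex, so after an interior
maximum there it could not come back down to `0`. -/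
theorem exists_isMaxOn_le_of_hasDerivAt_neg_mul (hzc : z < c)
    (hu : ∀ t ∈ Ioo z c, HasDerivAt u (u' t) t)
    (hu' : ∀ t ∈ Ioo z c, HasDerivAt u' (-(Q t * u t)) t)
    (hcont : ContinuousOn u (Icc z c)) (hz : u z = 0) (hc : u c = 0)
    (hpos : ∀ t ∈ Ioo z c, 0 < u t) (hQ : ∀ t ∈ Ioo z c, a ≤ t → Q t ≤ 0) :
    ∃ m ∈ Ioo z c, m ≤ a ∧ u' m = 0 ∧ IsMaxOn u (Icc z c) m := by
  obtain ⟨m, hm, hmax⟩ := isCompact_Icc.exists_isMaxOn (nonempty_Icc.2 hzc.le) hcont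
  obtain ⟨p, hp⟩ := nonempty_Ioo.2 hzc
  have hum : 0 < u m := (hpos p hp).trans_le (hmax (Ioo_subset_Icc_self hp))
  have hzm : z < m := hm.1.lt_of_ne fun h => hum.ne' (h ▸ hz)
  have hmc : m < c := hm.2.lt_of_ne fun h => hum.ne' (h ▸ hc)
  have hu'm : u' m = 0 :=
    (hmax.isLocalMax (Icc_mem_nhds hzm hmc)).hasDerivAt_eq_zero (hu m ⟨hzm, hmc⟩)
  refine ⟨m, ⟨hzm, hmc⟩, not_lt.1 fun ham => ?_, hu'm, hmax⟩
  obtain ⟨ξ, hξ, hξ'⟩ := exists_hasDerivAt_eq_slope u u' hmc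
    (hcont.mono (Icc_subset_Icc_left hzm.le)) fun t ht => hu t ⟨hzm.trans ht.1, ht.2⟩
  have hu'ξ : u' ξ < 0 := by
    rw [hξ', hc]
    exact div_neg_of_neg_of_pos (by linarith) (sub_pos.2 hmc)
  obtain ⟨η, hη, hη'⟩ := exists_hasDerivAt_eq_slope u' (fun t => -(Q t * u t)) hξ.1
    (HasDerivAt.continuousOn fun t ht => hu' t ⟨hzm.trans_le ht.1, ht.2.trans_lt hξ.2⟩)
    fun t ht => hu' t ⟨hzm.trans ht.1, ht.2.trans hξ.2⟩
  have hηzc : η ∈ Ioo z c := ⟨hzm.trans hη.1, hη.2.trans hξ.2⟩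
  have hneg : -(Q η * u η) < 0 := by
    rw [hη', hu'm]
    exact div_neg_of_neg_of_pos (by linarith) (sub_pos.2 hξ.1)
  linarith [mul_nonpos_of_nonpos_of_nonneg (hQ η hηzc (ham.trans hη.1).le) (hpos η hηzc).le]

theorem one_le_mul_sub_sq_of_hasDerivAt_neg_mul (hzm : z ≤ m)
    (hu : ∀ t ∈ Icc z m, HasDerivAt u (u' t) t)
    (hu' : ∀ t ∈ Icc z m, HasDerivAt u' (-(Q t * u t)) t) (hz : u z = 0) (hm : u' m = 0)
    (hum : 0 < u m) (hmax : ∀ t ∈ Icc z m, |u t| ≤ u m) (hQ : ∀ t ∈ Icc z m, |Q t| ≤ M) :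
    1 ≤ M * (m - z) ^ 2 := by
  rw [← uIcc_of_ge hzm] at *
  have hM : ∀ t ∈ [[m, z]], ‖-(Q t * u t)‖ ≤ M * u m := fun t ht => by
    rw [norm_neg, norm_mul]
    exact mul_le_mul (hQ t ht) (hmax t ht) (abs_nonneg _) ((abs_nonneg _).trans (hQ t ht))
  have h := norm_sub_sub_smul_le_of_norm_hasDerivAt_le hu hu' hM
  rw [hz, hm, smul_zero, zero_sub, sub_zero, norm_neg, Real.norm_of_nonneg hum.le, sq_abs] at h
  refine le_of_mul_le_mul_right ?_ hum
  linarith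

end Analysis

section PhaseAmplitude

variable {ω b e f k g G : ℝ → ℝ} {c y : ℝ}

theorem integral_mul_sin_sub_of_hasDerivAt (hω : ∀ t ∈ [[c, y]], HasDerivAt ω (b t) t)
    (hf : ∀ t ∈ [[c, y]], HasDerivAt f (b t * k t) t)
    (hk : ∀ t ∈ [[c, y]], HasDerivAt k (-(b t + e t) * f t) t) (he : ContinuousOn e [[c, y]]) :
    ∫ t in c..y, e t * f t * sin (ω y - ω t) =
      f c * cos (ω y - ω c) + k c * sin (ω y - ω c) - f y := by
  have hderiv : ∀ t ∈ [[c, y]],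
      HasDerivAt (fun t => -(k t * sin (ω y - ω t) + f t * cos (ω y - ω t)))
        (e t * f t * sin (ω y - ω t)) t := fun t ht => by
    have hφ := (hω t ht).const_sub (ω y)
    refine (((hk t ht).fun_mul hφ.sin).fun_add ((hf t ht).fun_mul hφ.cos)).fun_neg.congr_deriv ?_
    ring
  rw [intervalIntegral.integral_eq_sub_of_hasDerivAt hderiv]
  · simp only [sub_self, sin_zero, cos_zero]
    ring
  · have hωc : ContinuousOn ω [[c, y]] := HasDerivAt.continuousOn hω
    have hfc : ContinuousOn f [[c, y]] := HasDerivAt.continuousOn hf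
    exact ContinuousOn.intervalIntegrable (by fun_prop)

theorem integral_mul_cos_sub_of_hasDerivAt (hω : ∀ t ∈ [[c, y]], HasDerivAt ω (b t) t)
    (hf : ∀ t ∈ [[c, y]], HasDerivAt f (b t * k t) t)
    (hk : ∀ t ∈ [[c, y]], HasDerivAt k (-(b t + e t) * f t) t) (he : ContinuousOn e [[c, y]]) :
    ∫ t in c..y, e t * f t * cos (ω y - ω t) =
      k c * cos (ω y - ω c) - f c * sin (ω y - ω c) - k y := by
  have hderiv : ∀ t ∈ [[c, y]],
      HasDerivAt (fun t => f t * sin (ω y - ω t) - k t * cos (ω y - ω t))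
        (e t * f t * cos (ω y - ω t)) t := fun t ht => by
    have hφ := (hω t ht).const_sub (ω y)
    refine (((hf t ht).fun_mul hφ.sin).fun_sub ((hk t ht).fun_mul hφ.cos)).congr_deriv ?_
    ring
  rw [intervalIntegral.integral_eq_sub_of_hasDerivAt hderiv]
  · simp only [sub_self, sin_zero, cos_zero]
    ring
  · have hωc : ContinuousOn ω [[c, y]] := HasDerivAt.continuousOn hω
    have hfc : ContinuousOn f [[c, y]] := HasDerivAt.continuousOn hf
    exact ContinuousOn.intervalIntegrable (by fun_prop)

theorem sq_add_sq_le_mul_exp (hcy : c ≤ y)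
    (hf : ∀ t ∈ Icc c y, HasDerivAt f (b t * k t) t)
    (hk : ∀ t ∈ Icc c y, HasDerivAt k (-(b t + e t) * f t) t)
    (hG : ∀ t ∈ Icc c y, HasDerivAt G (g t) t) (heg : ∀ t ∈ Icc c y, |e t| ≤ g t) :
    f y ^ 2 + k y ^ 2 ≤ (f c ^ 2 + k c ^ 2) * exp (G y - G c) := by
  set E : ℝ → ℝ := fun t => (f t ^ 2 + k t ^ 2) * exp (-G t)
  have hE : ∀ t ∈ Icc c y, HasDerivAt E
      (-(2 * e t * (f t * k t) + g t * (f t ^ 2 + k t ^ 2)) * exp (-G t)) t := fun t ht => by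
    refine ((((hf t ht).fun_pow 2).fun_add ((hk t ht).fun_pow 2)).fun_mul
      (hG t ht).fun_neg.exp).congr_deriv ?_
    push_cast
    ring
  have hneg : ∀ t ∈ Icc c y,
      -(2 * e t * (f t * k t) + g t * (f t ^ 2 + k t ^ 2)) * exp (-G t) ≤ 0 := fun t ht => by
    have hlow := neg_le_of_abs_le (heg t ht)
    have hupp := le_of_abs_le (heg t ht)
    refine mul_nonpos_of_nonpos_of_nonneg ?_ (exp_pos _).le
    nlinarith [mul_nonneg (sub_nonneg.2 hupp) (sq_nonneg (f t - k t)),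
      mul_nonneg (neg_le_iff_add_nonneg.1 hlow) (sq_nonneg (f t + k t))]
  have hanti : AntitoneOn E (Icc c y) :=
    antitoneOn_of_hasDerivWithinAt_nonpos (convex_Icc c y) (HasDerivAt.continuousOn hE)
      (fun t ht => (hE t (interior_subset ht)).hasDerivWithinAt)
      fun t ht => hneg t (interior_subset ht)
  have h : E y ≤ E c := hanti (left_mem_Icc.2 hcy) (right_mem_Icc.2 hcy) hcy
  calc f y ^ 2 + k y ^ 2 = E y * exp (G y) := by simp [E, mul_assoc, ← exp_add]
    _ ≤ E c * exp (G y) := by gcongr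
    _ = (f c ^ 2 + k c ^ 2) * exp (G y - G c) := by
      rw [mul_assoc, ← exp_add, neg_add_eq_sub]

/- The majorant is the exact integral of `g exp (G - G c)`. -/
theorem abs_integral_mul_le_mul_exp_sub_one {w : ℝ → ℝ} {F : ℝ} (hcy : c ≤ y)
    (hG : ∀ t ∈ Icc c y, HasDerivAt G (g t) t) (hg : ContinuousOn g (Icc c y))
    (heg : ∀ t ∈ Icc c y, |e t| ≤ g t) (hf : ∀ t ∈ Icc c y, |f t| ≤ F * exp (G t - G c))
    (hw : ∀ t, |w t| ≤ 1) :
    |∫ t in c..y, e t * f t * w t| ≤ F * (exp (G y - G c) - 1) := by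
  have hderiv : ∀ t ∈ [[c, y]],
      HasDerivAt (fun t => F * exp (G t - G c)) (g t * (F * exp (G t - G c))) t := fun t ht => by
    refine (((hG t (uIcc_of_le hcy ▸ ht)).sub_const (G c)).exp.const_mul F).congr_deriv ?_
    ring
  have hGc : ContinuousOn G (Icc c y) := HasDerivAt.continuousOn hG
  have hint : IntervalIntegrable (fun t => g t * (F * exp (G t - G c))) volume c y :=
    ContinuousOn.intervalIntegrable_of_Icc hcy (by fun_prop)
  have hle : ∀ t ∈ Ioc c y, ‖e t * f t * w t‖ ≤ g t * (F * exp (G t - G c)) := fun t ht => by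
    have ht := Ioc_subset_Icc_self ht
    have hmul := mul_le_mul (heg t ht) (hf t ht) (abs_nonneg _) ((abs_nonneg _).trans (heg t ht))
    rw [norm_mul, norm_mul]
    exact (mul_le_of_le_one_right (by positivity) (hw t)).trans hmul
  calc |∫ t in c..y, e t * f t * w t| ≤ ∫ t in c..y, g t * (F * exp (G t - G c)) :=
        intervalIntegral.norm_integral_le_of_norm_le hcy (ae_of_all _ hle) hint
    _ = F * (exp (G y - G c) - 1) := by
      rw [intervalIntegral.integral_eq_sub_of_hasDerivAt hderiv hint, sub_self, exp_zero]
      ring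

end PhaseAmplitude

section LiouvilleGreen

variable {u u' b β : ℝ → ℝ} {x β' ε : ℝ}

theorem hasDerivAt_sqrt_mul (hb : 0 < b x) (hu : HasDerivAt u (u' x) x)
    (hb' : HasDerivAt b (2 * β x * b x) x) :
    HasDerivAt (fun t => √(b t) * u t) (b x * ((u' x + β x * u x) / √(b x))) x := by
  refine ((hb'.sqrt hb.ne').fun_mul hu).congr_deriv ?_
  have hs := (sqrt_pos.2 hb).ne'
  have hsq := sq_sqrt hb.le
  field_simp
  rw [hsq]
  ring

theorem hasDerivAt_add_mul_div_sqrt (hb : 0 < b x) (hu : HasDerivAt u (u' x) x)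
    (hu' : HasDerivAt u' (-(b x ^ 2 * u x)) x) (hb' : HasDerivAt b (2 * β x * b x) x)
    (hβ : HasDerivAt β β' x) (hε : ε * b x ^ 2 = β x ^ 2 - β') :
    HasDerivAt (fun t => (u' t + β t * u t) / √(b t))
      (-(b x + ε * b x) * (√(b x) * u x)) x := by
  have hs := sqrt_pos.2 hb
  refine ((hu'.fun_add (hβ.fun_mul hu)).fun_div (hb'.sqrt hb.ne') hs.ne').congr_deriv ?_
  have hsq := sq_sqrt hb.le
  generalize √(b x) = r at *
  rw [← hsq] at hε ⊢
  field_simp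
  linear_combination u x * hε

end LiouvilleGreen

section Jacobi

theorem genBinom_succ (a : ℝ) (k : ℕ) : genBinom a (k + 1) * (k + 1) = genBinom a k * (a - k) := by
  simp only [genBinom, Finset.prod_range_succ, Nat.factorial_succ]
  push_cast
  field_simp

theorem genBinom_pos {a : ℝ} {k : ℕ} (h : (k : ℝ) < a + 1) : 0 < genBinom a k := by
  refine div_pos (Finset.prod_pos fun i hi => ?_) (by positivity)
  have hik : (i : ℝ) + 1 ≤ k := mod_cast Finset.mem_range.1 hi
  linarith

/-- The coefficient of `((x - 1) / 2) ^ s * ((x + 1) / 2) ^ (d - s)` in the Jacobi polynomial. -/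
def jacobiCoeff (α β : ℝ) (d s : ℕ) : ℝ := genBinom (d + α) (d - s) * genBinom (d + β) s

/-- The polynomial `((X - 1) / 2) ^ s * ((X + 1) / 2) ^ r`. -/
def halfMonomial (s r : ℕ) : ℝ[X] := (C 2⁻¹ * (X - 1)) ^ s * (C 2⁻¹ * (X + 1)) ^ r

/-- The Jacobi polynomial as an element of `ℝ[X]`, which gives access to its derivatives. -/
def jacobiPoly (α β : ℝ) (d : ℕ) : ℝ[X] :=
  ∑ s ∈ Finset.range (d + 1), C (jacobiCoeff α β d s) * halfMonomial s (d - s)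

variable {α β : ℝ} {d : ℕ} {x : ℝ}

theorem eval_halfMonomial (s r : ℕ) (x : ℝ) :
    (halfMonomial s r).eval x = ((x - 1) / 2) ^ s * ((x + 1) / 2) ^ r := by
  simp [halfMonomial, inv_mul_eq_div]

theorem eval_jacobiPoly (α β : ℝ) (d : ℕ) (x : ℝ) :
    (jacobiPoly α β d).eval x = jacobiP α β d x := by
  simp [jacobiPoly, jacobiP, jacobiCoeff, eval_finsetSum, eval_halfMonomial, mul_assoc]

theorem hasDerivAt_jacobiP (α β : ℝ) (d : ℕ) (x : ℝ) :
    HasDerivAt (jacobiP α β d) ((jacobiPoly α β d).derivative.eval x) x := by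
  rw [← funext (eval_jacobiPoly α β d)]
  exact (jacobiPoly α β d).hasDerivAt x

theorem continuous_jacobiP (α β : ℝ) (d : ℕ) : Continuous (jacobiP α β d) :=
  continuous_iff_continuousAt.2 fun x => (hasDerivAt_jacobiP α β d x).continuousAt

theorem jacobiCoeff_succ (α β : ℝ) (s r : ℕ) :
    jacobiCoeff α β (s + r + 1) (s + 1) * ((s + 1) * (s + 1 + α)) =
      jacobiCoeff α β (s + r + 1) s * ((r + 1) * (r + 1 + β)) := by
  have hβ := genBinom_succ ((s + r + 1 : ℕ) + β) s
  have hα := genBinom_succ ((s + r + 1 : ℕ) + α) r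
  simp only [jacobiCoeff, show s + r + 1 - (s + 1) = r by lia, show s + r + 1 - s = r + 1 by lia]
  push_cast at hα hβ ⊢
  linear_combination genBinom (s + r + 1 + α) r * (s + 1 + α) * hβ
    - genBinom (s + r + 1 + β) s * (r + 1 + β) * hα

/-- The Jacobi differential operator
`L p = (1 - x²) p'' + (β - α - (α + β + 2) x) p' + d (d + α + β + 1) p`, evaluated at `x`. -/
def jacobiOp (α β : ℝ) (d : ℕ) (p : ℝ[X]) (x : ℝ) : ℝ :=
  (1 - x ^ 2) * p.derivative.derivative.eval x
    + (β - α - (α + β + 2) * x) * p.derivative.eval x + d * (d + α + β + 1) * p.eval x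

theorem jacobiOp_halfMonomial (α β : ℝ) (s r : ℕ) (x : ℝ) :
    jacobiOp α β (s + r) (halfMonomial s r) x =
      s * (s + α) * ((halfMonomial s r).eval x - (halfMonomial (s - 1) (r + 1)).eval x)
        - r * (r + β) * ((halfMonomial (s + 1) (r - 1)).eval x - (halfMonomial s r).eval x) := by
  rcases s with _ | _ | s <;> rcases r with _ | _ | r <;>
    simp [jacobiOp, halfMonomial, derivative_pow, mul_pow] <;> ring

theorem jacobiOp_jacobiPoly (α β : ℝ) (d : ℕ) (x : ℝ) :
    jacobiOp α β d (jacobiPoly α β d) x = 0 := by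
  set F : ℕ → ℝ := fun s => jacobiCoeff α β d s * (s * (s + α) *
    ((halfMonomial s (d - s)).eval x - (halfMonomial (s - 1) (d - s + 1)).eval x))
  set H : ℕ → ℝ := fun s => jacobiCoeff α β d s * ((d - s : ℕ) * ((d - s : ℕ) + β) *
    ((halfMonomial (s + 1) (d - s - 1)).eval x - (halfMonomial s (d - s)).eval x))
  have hsum : jacobiOp α β d (jacobiPoly α β d) x =
      ∑ s ∈ Finset.range (d + 1),
        jacobiCoeff α β d s * jacobiOp α β d (halfMonomial s (d - s)) x := by
    simp only [jacobiOp, jacobiPoly, derivative_sum, derivative_C_mul, eval_finsetSum, eval_C_mul,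
      Finset.mul_sum, ← Finset.sum_add_distrib]
    exact Finset.sum_congr rfl fun s _ => by ring
  have hterm : ∀ s ∈ Finset.range (d + 1),
      jacobiCoeff α β d s * jacobiOp α β d (halfMonomial s (d - s)) x = F s - H s := fun s hs => by
    have h := jacobiOp_halfMonomial α β s (d - s) x
    rw [Nat.add_sub_cancel' (Finset.mem_range_succ_iff.1 hs)] at h
    rw [h, mul_sub]
  have hshift : ∀ s ∈ Finset.range d, F (s + 1) = H s := fun s hs => by
    obtain ⟨r, rfl⟩ := Nat.exists_eq_add_of_lt (Finset.mem_range.1 hs)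
    have h := jacobiCoeff_succ α β s r
    simp only [F, H, show s + r + 1 - (s + 1) = r by lia, show s + r + 1 - s = r + 1 by lia,
      Nat.add_sub_cancel]
    push_cast
    linear_combination
      ((halfMonomial (s + 1) r).eval x - (halfMonomial s (r + 1)).eval x) * h
  rw [hsum, Finset.sum_congr rfl hterm, Finset.sum_sub_distrib, Finset.sum_range_succ',
    Finset.sum_congr rfl hshift, Finset.sum_range_succ]
  simp [F, H]

theorem jacobiP_neg (α β : ℝ) (d : ℕ) (x : ℝ) :
    jacobiP α β d (-x) = (-1) ^ d * jacobiP β α d x := by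
  rw [jacobiP, jacobiP, ← Finset.sum_range_reflect, Finset.mul_sum]
  refine Finset.sum_congr rfl fun s hs => ?_
  obtain ⟨r, rfl⟩ := Nat.exists_eq_add_of_le (Finset.mem_range_succ_iff.1 hs)
  rw [show s + r + 1 - 1 - s = r by lia, Nat.add_sub_cancel, Nat.add_sub_cancel_left,
    show (-x - 1) / 2 = -1 * ((x + 1) / 2) by ring, show (-x + 1) / 2 = -1 * ((x - 1) / 2) by ring,
    mul_pow, mul_pow, pow_add]
  ring

theorem eval_derivative_jacobiPoly_zero (α : ℝ) (hd : Even d) :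
    (jacobiPoly α α d).derivative.eval 0 = 0 := by
  have h := (hasDerivAt_jacobiP α α d (-0)).comp (0 : ℝ) (hasDerivAt_neg 0)
  have hsymm : jacobiP α α d ∘ Neg.neg = jacobiP α α d := by
    ext x
    simp [jacobiP_neg, hd.neg_one_pow]
  rw [hsymm, neg_zero] at h
  linarith [h.unique (hasDerivAt_jacobiP α α d 0)]

theorem jacobiP_pos_of_one_le (hα : -1 < α) (hβ : -1 < β) (hx : 1 ≤ x) :
    0 < jacobiP α β d x := by
  have hcoeff : ∀ s ∈ Finset.range (d + 1),
      0 < genBinom (d + α) (d - s) * genBinom (d + β) s := fun s hs => by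
    have hsd : (s : ℝ) ≤ d := mod_cast Finset.mem_range_succ_iff.1 hs
    have hds : ((d - s : ℕ) : ℝ) ≤ d := mod_cast Nat.sub_le d s
    exact mul_pos (genBinom_pos (by linarith)) (genBinom_pos (by linarith))
  have hx0 : 0 ≤ (x - 1) / 2 := by linarith
  have hx1 : 0 < (x + 1) / 2 := by linarith
  refine Finset.sum_pos' (fun s hs => ?_) ⟨0, by simp, ?_⟩
  · exact mul_nonneg (mul_nonneg (hcoeff s hs).le (pow_nonneg hx0 s)) (pow_nonneg hx1.le _)
  · rw [pow_zero, mul_one]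
    exact mul_pos (hcoeff 0 (by simp)) (pow_pos hx1 _)

/- The equation in self-adjoint form reads `(w p')' = -d (d + α + β + 1) (1 - x)^α (1 + x)^β p`
with `w = (1 - x)^(α + 1) (1 + x)^(β + 1)` vanishing at both endpoints. -/
theorem exists_jacobiP_eq_zero (hα : -1 < α) (hβ : -1 < β) (hd : d ≠ 0) :
    ∃ x ∈ Ioo (-1 : ℝ) 1, jacobiP α β d x = 0 := by
  set P := jacobiPoly α β d
  have hcont : Continuous fun x : ℝ =>
      (1 - x) ^ (α + 1) * (1 + x) ^ (β + 1) * P.derivative.eval x := by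
    have h1 : Continuous fun x : ℝ => (1 - x) ^ (α + 1) :=
      (continuous_const.sub continuous_id).rpow_const fun _ => Or.inr (by linarith)
    have h2 : Continuous fun x : ℝ => (1 + x) ^ (β + 1) :=
      (continuous_const.add continuous_id).rpow_const fun _ => Or.inr (by linarith)
    exact (h1.mul h2).mul P.derivative.continuous
  have hderiv : ∀ x ∈ Ioo (-1 : ℝ) 1, HasDerivAt
      (fun x : ℝ => (1 - x) ^ (α + 1) * (1 + x) ^ (β + 1) * P.derivative.eval x)
      ((1 - x) ^ α * (1 + x) ^ β * -(d * (d + α + β + 1) * P.eval x)) x := fun x hx => by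
    have h1 : 0 < 1 - x := sub_pos.2 hx.2
    have h2 : 0 < 1 + x := by linarith [hx.1]
    refine (((((hasDerivAt_id x).const_sub 1).rpow_const (Or.inl h1.ne')).fun_mul
      (((hasDerivAt_id x).const_add 1).rpow_const (Or.inl h2.ne'))).fun_mul
      (P.derivative.hasDerivAt x)).congr_deriv ?_
    simp only [add_sub_cancel_right, id, rpow_add_one h1.ne', rpow_add_one h2.ne']
    have hode := jacobiOp_jacobiPoly α β d x
    rw [jacobiOp] at hode
    linear_combination (1 - x) ^ α * (1 + x) ^ β * hode
  obtain ⟨x, hx, h⟩ := exists_hasDerivAt_eq_zero (by norm_num : (-1 : ℝ) < 1) hcont.continuousOn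
    (by simp [zero_rpow (by linarith : α + 1 ≠ 0), zero_rpow (by linarith : β + 1 ≠ 0)]) hderiv
  have h1 := rpow_pos_of_pos (sub_pos.2 hx.2) α
  have h2 := rpow_pos_of_pos (by linarith [hx.1] : 0 < 1 + x) β
  have hd1 : (1 : ℝ) ≤ d := mod_cast Nat.one_le_iff_ne_zero.2 hd
  have hd2 : (d : ℝ) + α + β + 1 ≠ 0 := by linarith
  refine ⟨x, hx, ?_⟩
  rw [← eval_jacobiPoly]
  simpa [h1.ne', h2.ne', hd, hd2] using h

theorem isGreatest_maxRoot (hα : -1 < α) (hβ : -1 < β) (hd : d ≠ 0) :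
    IsGreatest {x | jacobiP α β d x = 0} (maxRoot α β d) := by
  obtain ⟨y, -, hy⟩ := exists_jacobiP_eq_zero hα hβ hd
  have hbdd : BddAbove {x | jacobiP α β d x = 0} :=
    ⟨1, fun x hx => not_lt.1 fun h => (jacobiP_pos_of_one_le hα hβ h.le).ne' hx⟩
  exact ⟨(isClosed_singleton.preimage (continuous_jacobiP α β d)).csSup_mem ⟨y, hy⟩ hbdd,
    fun x hx => le_csSup hbdd hx⟩

theorem maxRoot_lt_one (hα : -1 < α) (hβ : -1 < β) (hd : d ≠ 0) : maxRoot α β d < 1 :=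
  not_le.1 fun h => (jacobiP_pos_of_one_le hα hβ h).ne' (isGreatest_maxRoot hα hβ hd).1

theorem jacobiP_pos_of_maxRoot_lt (hα : -1 < α) (hβ : -1 < β) (hd : d ≠ 0)
    (hx : maxRoot α β d < x) : 0 < jacobiP α β d x := by
  by_contra! hle
  obtain ⟨y, hy, hy0⟩ := intermediate_value_Icc (le_max_left x 1)
    (continuous_jacobiP α β d).continuousOn
    ⟨hle, (jacobiP_pos_of_one_le hα hβ (le_max_right x 1)).le⟩
  exact (hx.trans_le hy.1).not_ge ((isGreatest_maxRoot hα hβ hd).2 hy0)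

theorem maxRoot_nonneg (hα : -1 < α) (hd : d ≠ 0) : 0 ≤ maxRoot α α d := by
  have hmax := isGreatest_maxRoot hα hα hd
  have hneg : jacobiP α α d (-maxRoot α α d) = 0 := by
    rw [jacobiP_neg, hmax.1, mul_zero]
  linarith [hmax.2 hneg]

end Jacobi

section NormalForm

/-- The factor `(d + α) (d + α + 1)` of the paper, the square of the large parameter. -/
def Nda (d : ℕ) (α : ℝ) : ℝ := (d + α) * (d + α + 1)

/-- The potential in the Liouville normal form `u'' = -potda * u` of the Jacobi equation; it is
`bda ^ 2` up to the turning point `√(1 - q)` and negative beyond. -/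
def potda (d : ℕ) (α x : ℝ) : ℝ := Nda d α * (1 - qda d α - x ^ 2) / (1 - x ^ 2) ^ 2

/-- The solution `u` of the Liouville normal form of the Jacobi equation, for `x ^ 2 < 1`. -/
def uda (d : ℕ) (α x : ℝ) : ℝ := (1 - x ^ 2) ^ ((α + 1) / 2) * jacobiP α α d x

/-- The derivative of `uda`. -/
def udaDeriv (d : ℕ) (α x : ℝ) : ℝ :=
  (1 - x ^ 2) ^ ((α + 1) / 2) *
    ((jacobiPoly α α d).derivative.eval x - (α + 1) * x / (1 - x ^ 2) * jacobiP α α d x)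

/-- Half the logarithmic derivative of `bda`. -/
def betada (d : ℕ) (α x : ℝ) : ℝ := x / (1 - x ^ 2) - x / (2 * (1 - qda d α - x ^ 2))

/-- The derivative of `fda` with respect to the phase `omegada`. -/
def kda (d : ℕ) (α x : ℝ) : ℝ :=
  (udaDeriv d α x + betada d α x * uda d α x) / √(bda d α x)

variable {d : ℕ} {α x : ℝ}

theorem Nda_pos (hα : 0 < α) : 0 < Nda d α := by
  unfold Nda
  positivity

theorem sq_lt_Nda (hα : 0 < α) : α ^ 2 < Nda d α := by
  unfold Nda
  nlinarith [d.cast_nonneg (α := ℝ)]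

theorem qda_mul_Nda (hα : 0 < α) : qda d α * Nda d α = α ^ 2 - 1 :=
  div_mul_cancel₀ _ (Nda_pos hα).ne'

theorem qda_pos (hα : 1 < α) : 0 < qda d α :=
  div_pos (by nlinarith) (Nda_pos (zero_lt_one.trans hα))

theorem qda_lt_one (hα : 0 < α) : qda d α < 1 :=
  (div_lt_one (Nda_pos hα)).2 (by linarith [sq_lt_Nda (d := d) hα, Nda])

theorem sq_lt_one_of_sq_lt_one_sub_qda (hα : 1 < α) (hx : x ^ 2 < 1 - qda d α) : x ^ 2 < 1 := by
  linarith [qda_pos (d := d) hα]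

theorem hasDerivAt_const_sub_sq (c x : ℝ) : HasDerivAt (fun y : ℝ => c - y ^ 2) (-(2 * x)) x := by
  simpa using ((hasDerivAt_id x).fun_pow 2).const_sub c

theorem hasDerivAt_uda (hx : x ^ 2 < 1) : HasDerivAt (uda d α) (udaDeriv d α x) x := by
  have hx' := sub_pos.2 hx
  refine (((hasDerivAt_const_sub_sq 1 x).rpow_const (Or.inl hx'.ne')).fun_mul
    (hasDerivAt_jacobiP α α d x)).congr_deriv ?_
  rw [rpow_sub_one hx'.ne', udaDeriv]
  field_simp
  ring

theorem hasDerivAt_udaDeriv (hα : 0 < α) (hx : x ^ 2 < 1) :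
    HasDerivAt (udaDeriv d α) (-(potda d α x * uda d α x)) x := by
  have hx' := (sub_pos.2 hx).ne'
  have hlog := (((hasDerivAt_id x).const_mul (α + 1)).fun_div (hasDerivAt_const_sub_sq 1 x) hx')
  refine (((hasDerivAt_const_sub_sq 1 x).rpow_const (Or.inl hx')).fun_mul
    (((jacobiPoly α α d).derivative.hasDerivAt x).fun_sub
      (hlog.fun_mul (hasDerivAt_jacobiP α α d x)))).congr_deriv ?_
  have hode := jacobiOp_jacobiPoly α α d x
  have hpot : potda d α x = (Nda d α * (1 - x ^ 2) - (α ^ 2 - 1)) / (1 - x ^ 2) ^ 2 := by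
    rw [potda, ← qda_mul_Nda (d := d) hα]
    ring
  rw [rpow_sub_one hx', hpot, uda, Nda]
  rw [jacobiOp, eval_jacobiPoly] at hode
  simp only [id]
  field_simp
  linear_combination (1 - x ^ 2) ^ ((α + 1) / 2) * (1 - x ^ 2) * hode

theorem bda_pos (hα : 1 < α) (hx : x ^ 2 < 1 - qda d α) : 0 < bda d α x :=
  div_pos (mul_pos (sqrt_pos.2 (sub_pos.2 hx)) (sqrt_pos.2 (Nda_pos (zero_lt_one.trans hα))))
    (sub_pos.2 (sq_lt_one_of_sq_lt_one_sub_qda hα hx))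

theorem bda_sq (hα : 0 < α) (hx : x ^ 2 < 1 - qda d α) : bda d α x ^ 2 = potda d α x := by
  rw [bda, ← Nda, potda, div_pow, mul_pow, sq_sqrt (sub_pos.2 hx).le, sq_sqrt (Nda_pos hα).le,
    mul_comm]

theorem hasDerivAt_bda (hα : 1 < α) (hx : x ^ 2 < 1 - qda d α) :
    HasDerivAt (bda d α) (2 * betada d α x * bda d α x) x := by
  have hg := sub_pos.2 hx
  have hx' := (sub_pos.2 (sq_lt_one_of_sq_lt_one_sub_qda hα hx)).ne'
  refine ((((hasDerivAt_const_sub_sq (1 - qda d α) x).sqrt hg.ne').mul_const _).fun_div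
    (hasDerivAt_const_sub_sq 1 x) hx').congr_deriv ?_
  have hr := (sqrt_pos.2 hg).ne'
  have hr2 := sq_sqrt hg.le
  rw [betada, bda]
  generalize √(1 - qda d α - x ^ 2) = r at *
  rw [← hr2]
  field_simp
  ring

theorem hasDerivAt_betada (hα : 1 < α) (hx : x ^ 2 < 1 - qda d α) :
    HasDerivAt (betada d α) (betada d α x ^ 2 - epsda d α x * bda d α x ^ 2) x := by
  have hα0 := zero_lt_one.trans hα
  have hg := (sub_pos.2 hx).ne'
  have hx' := (sub_pos.2 (sq_lt_one_of_sq_lt_one_sub_qda hα hx)).ne'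
  have hN := (Nda_pos (d := d) hα0).ne'
  refine (((hasDerivAt_id x).fun_div (hasDerivAt_const_sub_sq 1 x) hx').fun_sub
    ((hasDerivAt_id x).fun_div ((hasDerivAt_const_sub_sq (1 - qda d α) x).const_mul 2)
      (mul_ne_zero two_ne_zero hg))).congr_deriv ?_
  rw [bda_sq hα0 hx, betada, epsda, potda, ← Nda]
  simp only [id]
  field_simp
  ring

theorem fda_eq_sqrt_bda_mul_uda (hα : 1 < α) (hx : x ^ 2 < 1 - qda d α) :
    fda d α x = √(bda d α x) * uda d α x := by
  have hg := sub_pos.2 hx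
  have hN := Nda_pos (d := d) (zero_lt_one.trans hα)
  have hx' := sub_pos.2 (sq_lt_one_of_sq_lt_one_sub_qda hα hx)
  have hsqrt : √(bda d α x) =
      ((1 - qda d α - x ^ 2) * Nda d α) ^ ((1 : ℝ) / 4) / (1 - x ^ 2) ^ ((1 : ℝ) / 2) := by
    rw [bda, ← Nda, ← sqrt_mul hg.le, sqrt_div (sqrt_nonneg _), ← sqrt_eq_rpow, sqrt_eq_rpow,
      sqrt_eq_rpow, ← rpow_mul (mul_pos hg hN).le]
    norm_num
  have hpow : (1 - x ^ 2) ^ (α / 2) =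
      (1 - x ^ 2) ^ ((α + 1) / 2) / (1 - x ^ 2) ^ ((1 : ℝ) / 2) := by
    rw [← rpow_sub hx']
    ring_nf
  rw [fda, ← Nda, hsqrt, hpow, uda]
  ring

theorem hasDerivAt_fda (hα : 1 < α) (hx : x ^ 2 < 1 - qda d α) :
    HasDerivAt (fda d α) (bda d α x * kda d α x) x := by
  have hu := hasDerivAt_uda (d := d) (α := α) (sq_lt_one_of_sq_lt_one_sub_qda hα hx)
  refine (hasDerivAt_sqrt_mul (bda_pos hα hx) hu
    (hasDerivAt_bda hα hx)).congr_of_eventuallyEq ?_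
  filter_upwards [(isOpen_lt (continuous_pow 2) continuous_const).mem_nhds hx] with y hy
  exact fda_eq_sqrt_bda_mul_uda hα hy

theorem hasDerivAt_kda (hα : 1 < α) (hx : x ^ 2 < 1 - qda d α) :
    HasDerivAt (kda d α) (-(bda d α x + epsda d α x * bda d α x) * fda d α x) x := by
  have hx1 := sq_lt_one_of_sq_lt_one_sub_qda hα hx
  have hα0 := zero_lt_one.trans hα
  rw [fda_eq_sqrt_bda_mul_uda hα hx]
  exact hasDerivAt_add_mul_div_sqrt (bda_pos hα hx) (hasDerivAt_uda hx1)
    (bda_sq hα0 hx ▸ hasDerivAt_udaDeriv hα0 hx1) (hasDerivAt_bda hα hx)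
    (hasDerivAt_betada hα hx) (by ring)

end NormalForm

section Phase

variable {d : ℕ} {α x : ℝ}

/-- An antiderivative of `bda`, odd in `x`; it is equal to `omegada` for `0 ≤ x` but, unlike
`omegada`, differentiable at `0`. -/
def phaseda (d : ℕ) (α x : ℝ) : ℝ :=
  √(Nda d α) * (arctan (x / √(1 - qda d α - x ^ 2)) -
    √(qda d α) * arctan (√(qda d α) * x / √(1 - qda d α - x ^ 2)))

theorem arccos_sqrt_div_add_sq {g y : ℝ} (hg : 0 < g) (hy : 0 ≤ y) :
    arccos √(g / (g + y ^ 2)) = arctan (y / √g) := by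
  have hD : 0 < g + y ^ 2 := by positivity
  have hgD : 0 < g / (g + y ^ 2) := div_pos hg hD
  have hcompl : 1 - g / (g + y ^ 2) = y ^ 2 / (g + y ^ 2) := by
    field_simp
    ring
  rw [arccos_eq_arctan (sqrt_pos.2 hgD), sq_sqrt hgD.le, hcompl, sqrt_div (sq_nonneg y),
    sqrt_sq hy, sqrt_div hg.le, div_div_div_cancel_right₀ (sqrt_pos.2 hD).ne']

theorem omegada_eq_phaseda (hα : 1 < α) (hx0 : 0 ≤ x) (hx : x ^ 2 < 1 - qda d α) :
    omegada d α x = phaseda d α x := by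
  have hg := sub_pos.2 hx
  have hq := qda_pos (d := d) hα
  have h1 := arccos_sqrt_div_add_sq hg hx0
  have h2 := arccos_sqrt_div_add_sq hg (mul_nonneg (sqrt_nonneg (qda d α)) hx0)
  rw [sub_add_cancel] at h1
  rw [mul_pow, sq_sqrt hq.le,
    show 1 - qda d α - x ^ 2 + qda d α * x ^ 2 = (1 - qda d α) * (1 - x ^ 2) by ring] at h2
  rw [omegada, h1, h2, phaseda, Nda]

theorem hasDerivAt_arctan_mul_div_sqrt (c : ℝ) {a : ℝ} (hx : x ^ 2 < a) :
    HasDerivAt (fun y => arctan (c * y / √(a - y ^ 2)))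
      (c * a / (√(a - x ^ 2) * (a - x ^ 2 + c ^ 2 * x ^ 2))) x := by
  have hg := sub_pos.2 hx
  have hr := sqrt_pos.2 hg
  refine (((hasDerivAt_id x).const_mul c).fun_div
    ((hasDerivAt_const_sub_sq a x).sqrt hg.ne') hr.ne').arctan.congr_deriv ?_
  have hr2 := sq_sqrt hg.le
  simp only [id]
  generalize √(a - x ^ 2) = r at *
  obtain rfl : a = r ^ 2 + x ^ 2 := by rw [hr2]; ring
  rw [add_sub_cancel_right]
  have hsum : r ^ 2 + c ^ 2 * x ^ 2 ≠ 0 := by positivity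
  rw [show 1 + (c * x / r) ^ 2 = (r ^ 2 + c ^ 2 * x ^ 2) / r ^ 2 by field_simp]
  field_simp
  ring

theorem hasDerivAt_phaseda (hα : 1 < α) (hx : x ^ 2 < 1 - qda d α) :
    HasDerivAt (phaseda d α) (bda d α x) x := by
  have hq := qda_pos (d := d) hα
  have hq1 := (sub_pos.2 (qda_lt_one (d := d) (zero_lt_one.trans hα))).ne'
  have hg := sub_pos.2 hx
  have hr := (sqrt_pos.2 hg).ne'
  have hx' := (sub_pos.2 (sq_lt_one_of_sq_lt_one_sub_qda hα hx)).ne'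
  have h1 := hasDerivAt_arctan_mul_div_sqrt 1 hx
  simp only [one_mul, one_pow, sub_add_cancel] at h1
  refine ((h1.fun_sub ((hasDerivAt_arctan_mul_div_sqrt √(qda d α) hx).const_mul
    √(qda d α))).const_mul √(Nda d α)).congr_deriv ?_
  rw [bda, ← Nda, sq_sqrt hq.le,
    show 1 - qda d α - x ^ 2 + qda d α * x ^ 2 = (1 - qda d α) * (1 - x ^ 2) by ring]
  have hr2 := sq_sqrt hg.le
  field_simp
  rw [sq_sqrt hq.le, hr2]
  ring

theorem phaseda_zero (d : ℕ) (α : ℝ) : phaseda d α 0 = 0 := by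
  simp [phaseda]

end Phase

section Origin

variable {d : ℕ} {α x y : ℝ}

theorem continuousOn_epsda_mul_bda (hα : 1 < α) :
    ContinuousOn (fun t => epsda d α t * bda d α t) {t | t ^ 2 < 1 - qda d α} := by
  intro t (ht : t ^ 2 < 1 - qda d α)
  have hN := (Nda_pos (d := d) (zero_lt_one.trans hα)).ne'
  have hden : 4 * ((d + α) * (d + α + 1)) * (1 - qda d α - t ^ 2) ^ 3 ≠ 0 :=
    mul_ne_zero (mul_ne_zero four_ne_zero hN) (pow_ne_zero 3 (sub_pos.2 ht).ne')
  have heps : ContinuousAt (epsda d α) t := by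
    unfold epsda
    fun_prop (disch := assumption)
  exact (heps.mul (hasDerivAt_bda hα ht).continuousAt).continuousWithinAt

theorem sq_lt_of_mem_uIcc_zero {c : ℝ} (hy : y ^ 2 < c) (hx : x ∈ [[0, y]]) : x ^ 2 < c :=
  (sq_le_sq.2 (by simpa using abs_sub_left_of_mem_uIcc hx)).trans_lt hy

theorem kda_zero (hd : Even d) : kda d α 0 = 0 := by
  simp [kda, udaDeriv, betada, eval_derivative_jacobiPoly_zero α hd]

end Origin

section Bounds

/-- The square root `r` of `1 - q - x²`, which measures the distance to the turning point. -/
def rda (d : ℕ) (α x : ℝ) : ℝ := √(1 - qda d α - x ^ 2)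

/-- An explicit majorant of `∫ |epsda * bda|` over `[0, x]`, the total error of the Liouville-Green
approximation. -/
def errda (d : ℕ) (α x : ℝ) : ℝ :=
  4 / (qda d α * (1 - qda d α) * √(Nda d α)) * (x / rda d α x ^ 3)

variable {d : ℕ} {α x y : ℝ}

theorem rda_pos (hx : x ^ 2 < 1 - qda d α) : 0 < rda d α x := sqrt_pos.2 (sub_pos.2 hx)

theorem rda_sq (hx : x ^ 2 < 1 - qda d α) : rda d α x ^ 2 = 1 - qda d α - x ^ 2 :=
  sq_sqrt (sub_pos.2 hx).le

theorem sqrt_Nda_pos (hα : 0 < α) : 0 < √(Nda d α) := sqrt_pos.2 (Nda_pos hα)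

theorem hasDerivAt_errda (hx : x ^ 2 < 1 - qda d α) :
    HasDerivAt (errda d α)
      (4 / (qda d α * (1 - qda d α) * √(Nda d α)) *
        ((1 - qda d α + 2 * x ^ 2) / rda d α x ^ 5)) x := by
  have hr := rda_pos hx
  have hderiv : HasDerivAt (rda d α) (-(2 * x) / (2 * rda d α x)) x :=
    (hasDerivAt_const_sub_sq (1 - qda d α) x).sqrt (sub_pos.2 hx).ne'
  refine (((hasDerivAt_id x).fun_div (hderiv.fun_pow 3)
    (pow_pos hr 3).ne').const_mul _).congr_deriv ?_
  congr 1
  rw [show 1 - qda d α + 2 * x ^ 2 = rda d α x ^ 2 + 3 * x ^ 2 by rw [rda_sq hx]; ring]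
  simp only [id]
  field_simp
  ring

theorem errda_nonneg (hα : 1 < α) (hx : 0 ≤ x) : 0 ≤ errda d α x := by
  have hq := qda_pos (d := d) hα
  have hq1 := sub_pos.2 (qda_lt_one (d := d) (zero_lt_one.trans hα))
  unfold errda rda
  positivity

theorem errda_zero (d : ℕ) (α : ℝ) : errda d α 0 = 0 := by simp [errda]

theorem mul_rda_le_bda (hα : 1 < α) (hx : x ^ 2 < 1 - qda d α) :
    √(Nda d α) * rda d α x ≤ bda d α x := by
  rw [bda, ← rda, ← Nda, mul_comm]
  exact le_div_self (by unfold rda; positivity)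
    (sub_pos.2 (sq_lt_one_of_sq_lt_one_sub_qda hα hx)) (by linarith [sq_nonneg x])

theorem bda_le_mul_rda_div (hα : 1 < α) (hx : x ^ 2 < 1 - qda d α) :
    bda d α x ≤ √(Nda d α) * rda d α x / qda d α := by
  rw [bda, ← rda, ← Nda, mul_comm]
  exact div_le_div_of_nonneg_left (by unfold rda; positivity) (qda_pos hα) (by linarith)

theorem abs_betada_le (hα : 1 < α) (hx : x ^ 2 < 1 - qda d α) :
    |betada d α x| ≤ 1 / (2 * rda d α x ^ 2) := by
  have hr := sub_pos.2 hx
  have hx1 := sq_lt_one_of_sq_lt_one_sub_qda hα hx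
  have hx' := sub_pos.2 hx1
  have hq := qda_pos (d := d) hα
  have hβ : betada d α x =
      x * ((1 - 2 * qda d α - x ^ 2) / (1 - x ^ 2)) / (2 * (1 - qda d α - x ^ 2)) := by
    rw [betada]
    field_simp
    ring
  have hquot : |(1 - 2 * qda d α - x ^ 2) / (1 - x ^ 2)| ≤ 1 := by
    rw [abs_div, abs_of_pos hx', div_le_one hx', abs_le]
    constructor <;> linarith
  have hx1' : |x| ≤ 1 := abs_le_one_iff_mul_self_le_one.2 (by linarith)
  rw [hβ, rda_sq hx, abs_div, abs_of_pos (mul_pos two_pos hr), abs_mul]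
  gcongr
  exact mul_le_one₀ hx1' (abs_nonneg _) hquot

theorem abs_epsda_mul_bda_le (hα : 1 < α) (hx : x ^ 2 < 1 - qda d α) :
    |epsda d α x * bda d α x| ≤ 4 / (qda d α * √(Nda d α) * rda d α x ^ 5) := by
  have hα0 := zero_lt_one.trans hα
  have hq := qda_pos (d := d) hα
  have hq1 := qda_lt_one (d := d) hα0
  have hr := rda_pos hx
  have hν := sqrt_Nda_pos (d := d) hα0
  have hnum : |x ^ 6 + 6 * qda d α * x ^ 4 - 3 * x ^ 2 + 4 * qda d α ^ 2 - 6 * qda d α + 2| ≤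
      16 := by
    have hx1 : x ^ 2 ≤ 1 := by linarith
    have hx4 : x ^ 4 ≤ 1 := by simpa [← pow_mul] using pow_le_one₀ (n := 2) (sq_nonneg x) hx1
    have hq4 : qda d α * x ^ 4 ≤ 1 := mul_le_one₀ hq1.le (by positivity) hx4
    have h0 : 0 ≤ qda d α * x ^ 4 := by positivity
    have h06 : 0 ≤ x ^ 6 := by positivity
    rw [abs_le]
    constructor <;> nlinarith [sq_nonneg x]
  have heps : |epsda d α x| ≤ 16 / (4 * √(Nda d α) ^ 2 * rda d α x ^ 6) := by
    have hN := Nda_pos (d := d) hα0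
    rw [sq_sqrt hN.le, epsda, ← Nda, ← rda_sq hx, abs_div, abs_neg, ← pow_mul,
      abs_of_pos (by positivity : 0 < 4 * Nda d α * rda d α x ^ (2 * 3))]
    gcongr
  calc |epsda d α x * bda d α x| = |epsda d α x| * bda d α x := by
        rw [abs_mul, abs_of_pos (bda_pos hα hx)]
    _ ≤ 16 / (4 * √(Nda d α) ^ 2 * rda d α x ^ 6) * (√(Nda d α) * rda d α x / qda d α) :=
        mul_le_mul heps (bda_le_mul_rda_div hα hx) (bda_pos hα hx).le (by positivity)
    _ = 4 / (qda d α * √(Nda d α) * rda d α x ^ 5) := by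
        field_simp
        ring

theorem abs_epsda_mul_bda_le_deriv_errda (hα : 1 < α) (hx : x ^ 2 < 1 - qda d α) :
    |epsda d α x * bda d α x| ≤ 4 / (qda d α * (1 - qda d α) * √(Nda d α)) *
      ((1 - qda d α + 2 * x ^ 2) / rda d α x ^ 5) := by
  have hα0 := zero_lt_one.trans hα
  have hq := qda_pos (d := d) hα
  have hq1 := sub_pos.2 (qda_lt_one (d := d) hα0)
  have hr := rda_pos hx
  have hν := sqrt_Nda_pos (d := d) hα0
  calc |epsda d α x * bda d α x| ≤ 4 / (qda d α * √(Nda d α) * rda d α x ^ 5) :=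
        abs_epsda_mul_bda_le hα hx
    _ = 4 / (qda d α * (1 - qda d α) * √(Nda d α)) * ((1 - qda d α) / rda d α x ^ 5) := by
        field_simp
    _ ≤ _ := by
        gcongr
        linarith [sq_nonneg x]

theorem sq_lt_of_mem_Icc_zero {c : ℝ} (hy : y ^ 2 < c) (hx : x ∈ Icc 0 y) : x ^ 2 < c :=
  (pow_le_pow_left₀ hx.1 hx.2 2).trans_lt hy

theorem abs_fda_le (hα : 1 < α) (hd : Even d) (hx0 : 0 ≤ x) (hx : x ^ 2 < 1 - qda d α) :
    |fda d α x| ≤ |fda d α 0| * exp (errda d α x) := by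
  have hmem : ∀ t ∈ Icc 0 x, t ^ 2 < 1 - qda d α := fun t => sq_lt_of_mem_Icc_zero hx
  have henergy := sq_add_sq_le_mul_exp hx0 (fun t ht => hasDerivAt_fda hα (hmem t ht))
    (fun t ht => hasDerivAt_kda hα (hmem t ht)) (fun t ht => hasDerivAt_errda (hmem t ht))
    fun t ht => abs_epsda_mul_bda_le_deriv_errda hα (hmem t ht)
  rw [kda_zero hd, errda_zero, sub_zero, zero_pow two_ne_zero, add_zero] at henergy
  have hexp : exp (errda d α x) ≤ exp (errda d α x) ^ 2 :=
    le_self_pow₀ (one_le_exp (errda_nonneg hα hx0)) two_ne_zero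
  refine abs_le_of_sq_le_sq ?_ (by positivity)
  calc fda d α x ^ 2 ≤ fda d α x ^ 2 + kda d α x ^ 2 := le_add_of_nonneg_right (sq_nonneg _)
    _ ≤ fda d α 0 ^ 2 * exp (errda d α x) := henergy
    _ ≤ fda d α 0 ^ 2 * exp (errda d α x) ^ 2 := by gcongr
    _ = (|fda d α 0| * exp (errda d α x)) ^ 2 := by rw [mul_pow, sq_abs]

/- Otherwise the energy estimate would make `fda`, hence the Jacobi polynomial, vanish on an
interval. -/
theorem fda_zero_ne_zero (hα : 1 < α) (hd : Even d) : fda d α 0 ≠ 0 := fun hf0 => by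
  have hα1 : -1 < α := by linarith
  have hroot : ∀ x ∈ Ioo 0 √(1 - qda d α), (jacobiPoly α α d).IsRoot x := fun x hx => by
    have hx' : x ^ 2 < 1 - qda d α := (lt_sqrt hx.1.le).1 hx.2
    have hf := abs_fda_le hα hd hx.1.le hx'
    rw [hf0, abs_zero, zero_mul, abs_nonpos_iff, fda_eq_sqrt_bda_mul_uda hα hx', uda] at hf
    have hw := rpow_pos_of_pos (sub_pos.2 (sq_lt_one_of_sq_lt_one_sub_qda hα hx')) ((α + 1) / 2)
    rw [IsRoot, eval_jacobiPoly]
    simpa [(sqrt_pos.2 (bda_pos hα hx')).ne', hw.ne'] using hf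
  have hinf := Ioo_infinite (sqrt_pos.2 (sub_pos.2 (qda_lt_one (d := d) (zero_lt_one.trans hα))))
  have hzero := eq_zero_of_infinite_isRoot _ (hinf.mono hroot)
  have hpos := jacobiP_pos_of_one_le (d := d) hα1 hα1 le_rfl
  rw [← eval_jacobiPoly, hzero, eval_zero] at hpos
  exact hpos.false

theorem abs_one_div_fda_mul_integral_le (hα : 1 < α) (hd : Even d) (hy0 : 0 ≤ y)
    (hy : y ^ 2 < 1 - qda d α) {w : ℝ → ℝ} (hw : ∀ t, |w t| ≤ 1) :
    |1 / fda d α 0 * ∫ t in (0 : ℝ)..y, epsda d α t * bda d α t * fda d α t * w t| ≤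
      exp (errda d α y) - 1 := by
  have hmem : ∀ t ∈ Icc 0 y, t ^ 2 < 1 - qda d α := fun t => sq_lt_of_mem_Icc_zero hy
  have hcont : ContinuousOn (fun t => 4 / (qda d α * (1 - qda d α) * √(Nda d α)) *
      ((1 - qda d α + 2 * t ^ 2) / rda d α t ^ 5)) (Icc 0 y) := by
    have hr : ∀ t ∈ Icc 0 y, rda d α t ^ 5 ≠ 0 := fun t ht => (pow_pos (rda_pos (hmem t ht)) 5).ne'
    have hrc : Continuous (rda d α) := by unfold rda; fun_prop
    fun_prop (disch := assumption)
  have hint := abs_integral_mul_le_mul_exp_sub_one (F := |fda d α 0|) hy0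
    (fun t ht => hasDerivAt_errda (hmem t ht)) hcont
    (fun t ht => abs_epsda_mul_bda_le_deriv_errda hα (hmem t ht))
    (fun t ht => by simpa [errda_zero] using abs_fda_le hα hd ht.1 (hmem t ht)) hw
  rw [errda_zero, sub_zero] at hint
  have hf0 := abs_pos.2 (fda_zero_ne_zero hα hd)
  rwa [abs_mul, abs_div, abs_one, one_div, inv_mul_le_iff₀ hf0]

theorem abs_Rda_le (hα : 1 < α) (hd : Even d) (hy0 : 0 ≤ y) (hy : y ^ 2 < 1 - qda d α) :
    |Rda d α y| ≤ exp (errda d α y) - 1 :=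
  abs_one_div_fda_mul_integral_le hα hd hy0 hy fun _ => abs_sin_le_one _

theorem abs_Tda_le (hα : 1 < α) (hd : Even d) (hy0 : 0 ≤ y) (hy : y ^ 2 < 1 - qda d α) :
    |Tda d α y| ≤ exp (errda d α y) - 1 :=
  abs_one_div_fda_mul_integral_le hα hd hy0 hy fun _ => abs_cos_le_one _

end Bounds

section LargestRoot

variable {d : ℕ} {α : ℝ}

theorem uda_maxRoot (hα : -1 < α) (hd : d ≠ 0) : uda d α (maxRoot α α d) = 0 := by
  rw [uda, (isGreatest_maxRoot hα hα hd).1, mul_zero]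

theorem uda_pos_of_maxRoot_lt (hα : -1 < α) (hd : d ≠ 0) {t : ℝ} (ht : maxRoot α α d < t)
    (ht1 : t < 1) : 0 < uda d α t := by
  have ht0 := (maxRoot_nonneg hα hd).trans ht.le
  exact mul_pos (rpow_pos_of_pos (by nlinarith) _) (jacobiP_pos_of_maxRoot_lt hα hα hd ht)

theorem potda_nonpos (hα : 0 < α) {t : ℝ} (ht : √(1 - qda d α) ≤ t) : potda d α t ≤ 0 := by
  refine div_nonpos_of_nonpos_of_nonneg ?_ (sq_nonneg _)
  exact mul_nonpos_of_nonneg_of_nonpos (Nda_pos hα).le (by linarith [(sqrt_le_iff.1 ht).2])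

theorem abs_potda_le (hα : 1 < α) {z t : ℝ} (hz : 0 ≤ z) (hzt : z ≤ t)
    (ht : t ≤ √(1 - qda d α)) :
    |potda d α t| ≤ Nda d α * (1 - qda d α - z ^ 2) / qda d α ^ 2 := by
  have hα0 := zero_lt_one.trans hα
  have hq := qda_pos (d := d) hα
  have hN := Nda_pos (d := d) hα0
  have ht2 : t ^ 2 ≤ 1 - qda d α := (pow_le_pow_left₀ (hz.trans hzt) ht 2).trans_eq
    (sq_sqrt (sub_pos.2 (qda_lt_one hα0)).le)
  have hzt2 := pow_le_pow_left₀ hz hzt 2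
  have hnum : 0 ≤ 1 - qda d α - t ^ 2 := sub_nonneg.2 ht2
  have hnumz : 0 ≤ Nda d α * (1 - qda d α - z ^ 2) := mul_nonneg hN.le (by linarith)
  rw [potda, abs_of_nonneg (div_nonneg (mul_nonneg hN.le hnum) (sq_nonneg _))]
  gcongr
  linarith

theorem exists_maxRoot_lt_le_and_one_le (hα : 1 < α) (hd : d ≠ 0) :
    ∃ m, maxRoot α α d < m ∧ m ≤ √(1 - qda d α) ∧
      1 ≤ Nda d α * (1 - qda d α - maxRoot α α d ^ 2) / qda d α ^ 2 *
        (m - maxRoot α α d) ^ 2 := by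
  have hα0 := zero_lt_one.trans hα
  have hα1 : -1 < α := by linarith
  have hz0 := maxRoot_nonneg hα1 hd
  have hz1 := maxRoot_lt_one hα1 hα1 hd
  have huz := uda_maxRoot hα1 hd
  have hpos : ∀ t, maxRoot α α d < t → t < 1 → 0 < uda d α t :=
    fun t => uda_pos_of_maxRoot_lt hα1 hd
  generalize maxRoot α α d = z at *
  have hsq : ∀ t, z ≤ t → t < 1 → t ^ 2 < 1 := fun t hzt ht1 => by nlinarith
  have hcont : ContinuousOn (uda d α) (Icc z 1) := by
    refine (Continuous.mul ?_ (continuous_jacobiP α α d)).continuousOn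
    exact (continuous_const.sub (continuous_pow 2)).rpow_const fun _ => Or.inr (by linarith)
  have hu1 : uda d α 1 = 0 := by simp [uda, zero_rpow (by linarith : (α + 1) / 2 ≠ 0)]
  obtain ⟨m, hm, hma, hu'm, hmax⟩ := exists_isMaxOn_le_of_hasDerivAt_neg_mul
    (a := √(1 - qda d α)) hz1 (fun t ht => hasDerivAt_uda (hsq t ht.1.le ht.2))
    (fun t ht => hasDerivAt_udaDeriv hα0 (hsq t ht.1.le ht.2)) hcont huz hu1
    (fun t ht => hpos t ht.1 ht.2) fun t _ => potda_nonpos hα0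
  have hnonneg : ∀ t ∈ Icc z m, 0 ≤ uda d α t := fun t ht =>
    ht.1.eq_or_lt.elim (fun h => (h ▸ huz).ge) fun h => (hpos t h (ht.2.trans_lt hm.2)).le
  exact ⟨m, hm.1, hma, one_le_mul_sub_sq_of_hasDerivAt_neg_mul hm.1.le
    (fun t ht => hasDerivAt_uda (hsq t ht.1 (ht.2.trans_lt hm.2)))
    (fun t ht => hasDerivAt_udaDeriv hα0 (hsq t ht.1 (ht.2.trans_lt hm.2))) huz hu'm
    (hpos m hm.1 hm.2)
    (fun t ht => (abs_of_nonneg (hnonneg t ht)).trans_le (hmax ⟨ht.1, ht.2.trans hm.2.le⟩))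
    fun t ht => abs_potda_le hα hz0 ht.1 (ht.2.trans hma)⟩

theorem maxRoot_sq_lt (hα : 1 < α) (hd : d ≠ 0) : maxRoot α α d ^ 2 < 1 - qda d α := by
  obtain ⟨m, hzm, hma, -⟩ := exists_maxRoot_lt_le_and_one_le hα hd
  have hz0 := maxRoot_nonneg (by linarith : -1 < α) hd
  exact (pow_lt_pow_left₀ (hzm.trans_le hma) hz0 two_ne_zero).trans_eq
    (sq_sqrt (sub_pos.2 (qda_lt_one (zero_lt_one.trans hα))).le)

theorem qda_sq_mul_le_Nda_mul_maxRoot (hα : 1 < α) (hd : d ≠ 0) :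
    qda d α ^ 2 * (1 - qda d α) ≤ Nda d α * (1 - qda d α - maxRoot α α d ^ 2) ^ 3 := by
  obtain ⟨m, hzm, hma, hone⟩ := exists_maxRoot_lt_le_and_one_le hα hd
  have hα0 := zero_lt_one.trans hα
  have hq := qda_pos (d := d) hα
  have hN := Nda_pos (d := d) hα0
  have hz0 := maxRoot_nonneg (by linarith : -1 < α) hd
  have hg := sub_pos.2 (maxRoot_sq_lt hα hd)
  have ha2 := sub_pos.2 (qda_lt_one (d := d) hα0)
  have ha := sqrt_pos.2 ha2
  have hasq := sq_sqrt ha2.le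
  generalize maxRoot α α d = z at *
  generalize √(1 - qda d α) = a at *
  have hgap : a * (m - z) ≤ 1 - qda d α - z ^ 2 := by
    rw [← hasq]
    nlinarith
  calc qda d α ^ 2 * (1 - qda d α)
      ≤ qda d α ^ 2 * a ^ 2 * (Nda d α * (1 - qda d α - z ^ 2) / qda d α ^ 2 * (m - z) ^ 2) := by
        rw [hasq]
        exact le_mul_of_one_le_right (by positivity) hone
    _ = Nda d α * (1 - qda d α - z ^ 2) * (a * (m - z)) ^ 2 := by field_simp
    _ ≤ Nda d α * (1 - qda d α - z ^ 2) * (1 - qda d α - z ^ 2) ^ 2 := by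
        have := sub_pos.2 hzm
        gcongr
    _ = Nda d α * (1 - qda d α - z ^ 2) ^ 3 := by ring

end LargestRoot

section Remainder

variable {d : ℕ} {α x y : ℝ}

theorem integral_epsda_eq_integral_phaseda (hα : 1 < α) (hy0 : 0 ≤ y) (hy : y ^ 2 < 1 - qda d α)
    (w : ℝ → ℝ) :
    ∫ t in (0 : ℝ)..y, epsda d α t * bda d α t * fda d α t * w (omegada d α y - omegada d α t) =
      ∫ t in (0 : ℝ)..y, epsda d α t * bda d α t * fda d α t *
        w (phaseda d α y - phaseda d α t) := by
  refine intervalIntegral.integral_congr fun t ht => ?_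
  rw [omegada_eq_phaseda hα hy0 hy, omegada_eq_phaseda hα (uIcc_of_le hy0 ▸ ht).1
    (sq_lt_of_mem_uIcc_zero hy ht)]

/-- The function given by the closed form of `Rda` on `0 ≤ x < √(1 - q)`; it is smooth on
`|x| < √(1 - q)`. -/
def Rclosed (d : ℕ) (α x : ℝ) : ℝ := cos (phaseda d α x) - fda d α x / fda d α 0

/-- The function given by the closed form of `Tda` on `0 ≤ x < √(1 - q)`; it is smooth on
`|x| < √(1 - q)`. -/
def Tclosed (d : ℕ) (α x : ℝ) : ℝ := -sin (phaseda d α x) - kda d α x / fda d α 0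

theorem Rda_eq_Rclosed (hα : 1 < α) (hd : Even d) (hy0 : 0 ≤ y) (hy : y ^ 2 < 1 - qda d α) :
    Rda d α y = Rclosed d α y := by
  have hmem : ∀ t ∈ [[0, y]], t ^ 2 < 1 - qda d α := fun t => sq_lt_of_mem_uIcc_zero hy
  have hf := fda_zero_ne_zero hα hd
  rw [Rda, integral_epsda_eq_integral_phaseda hα hy0 hy,
    integral_mul_sin_sub_of_hasDerivAt (fun t ht => hasDerivAt_phaseda hα (hmem t ht))
      (fun t ht => hasDerivAt_fda hα (hmem t ht)) (fun t ht => hasDerivAt_kda hα (hmem t ht))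
      ((continuousOn_epsda_mul_bda hα).mono hmem), phaseda_zero, kda_zero hd, Rclosed]
  field_simp
  ring_nf

theorem Tda_eq_Tclosed (hα : 1 < α) (hd : Even d) (hy0 : 0 ≤ y) (hy : y ^ 2 < 1 - qda d α) :
    Tda d α y = Tclosed d α y := by
  have hmem : ∀ t ∈ [[0, y]], t ^ 2 < 1 - qda d α := fun t => sq_lt_of_mem_uIcc_zero hy
  have hf := fda_zero_ne_zero hα hd
  rw [Tda, integral_epsda_eq_integral_phaseda hα hy0 hy,
    integral_mul_cos_sub_of_hasDerivAt (fun t ht => hasDerivAt_phaseda hα (hmem t ht))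
      (fun t ht => hasDerivAt_fda hα (hmem t ht)) (fun t ht => hasDerivAt_kda hα (hmem t ht))
      ((continuousOn_epsda_mul_bda hα).mono hmem), phaseda_zero, kda_zero hd, Tclosed]
  field_simp
  ring_nf

theorem hasDerivAt_Rclosed (hα : 1 < α) (hx : x ^ 2 < 1 - qda d α) :
    HasDerivAt (Rclosed d α) (bda d α x * Tclosed d α x) x := by
  refine ((hasDerivAt_phaseda hα hx).cos.fun_sub
    ((hasDerivAt_fda hα hx).div_const _)).congr_deriv ?_
  rw [Tclosed]
  ring

theorem hasDerivAt_bda_mul_Tclosed (hα : 1 < α) (hx : x ^ 2 < 1 - qda d α) :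
    HasDerivAt (fun y => bda d α y * Tclosed d α y)
      (bda d α x * (2 * betada d α x * Tclosed d α x +
        (epsda d α x * bda d α x * (fda d α x / fda d α 0) - bda d α x * Rclosed d α x))) x := by
  refine ((hasDerivAt_bda hα hx).fun_mul ((hasDerivAt_phaseda hα hx).sin.fun_neg.fun_sub
    ((hasDerivAt_kda hα hx).div_const _))).congr_deriv ?_
  rw [Tclosed, Rclosed]
  ring

theorem exp_sub_one_le_mul_exp (t : ℝ) : exp t - 1 ≤ t * exp t := by
  have h := mul_le_mul_of_nonneg_right (add_one_le_exp (-t)) (exp_pos t).le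
  rw [← exp_add, neg_add_cancel, exp_zero] at h
  linarith

theorem errda_le (hα : 1 < α) (hx : x ^ 2 < 1 - qda d α) :
    errda d α x ≤ 4 / (qda d α * (1 - qda d α) * (√(Nda d α) * rda d α x ^ 3)) := by
  have hα0 := zero_lt_one.trans hα
  have hq := qda_pos (d := d) hα
  have hq1 := sub_pos.2 (qda_lt_one (d := d) hα0)
  have hν := sqrt_Nda_pos (d := d) hα0
  have hr := rda_pos hx
  have hx1 : x ≤ 1 :=
    (le_abs_self x).trans ((sq_le_one_iff_abs_le_one x).1 (by linarith))
  calc errda d α x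
      ≤ 4 / (qda d α * (1 - qda d α) * √(Nda d α)) * (1 / rda d α x ^ 3) := by
        unfold errda
        gcongr
    _ = _ := by
        field_simp

theorem abs_Tclosed_le (hα : 1 < α) (hd : Even d) (hx0 : 0 ≤ x) (hx : x ^ 2 < 1 - qda d α) :
    |Tclosed d α x| ≤ exp (errda d α x) := by
  rw [← Tda_eq_Tclosed hα hd hx0 hx]
  exact (abs_Tda_le hα hd hx0 hx).trans (sub_le_self _ zero_le_one)

theorem abs_Rclosed_le (hα : 1 < α) (hd : Even d) (hx0 : 0 ≤ x) (hx : x ^ 2 < 1 - qda d α) :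
    |Rclosed d α x| ≤
      4 / (qda d α * (1 - qda d α) * (√(Nda d α) * rda d α x ^ 3)) * exp (errda d α x) := by
  rw [← Rda_eq_Rclosed hα hd hx0 hx]
  exact ((abs_Rda_le hα hd hx0 hx).trans (exp_sub_one_le_mul_exp _)).trans
    (mul_le_mul_of_nonneg_right (errda_le hα hx) (exp_pos _).le)

theorem abs_fda_div_fda_zero_le (hα : 1 < α) (hd : Even d) (hx0 : 0 ≤ x)
    (hx : x ^ 2 < 1 - qda d α) : |fda d α x / fda d α 0| ≤ exp (errda d α x) := by
  rw [abs_div, div_le_iff₀' (abs_pos.2 (fda_zero_ne_zero hα hd))]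
  exact abs_fda_le hα hd hx0 hx

theorem abs_deriv_bda_mul_Tclosed_le (hα : 1 < α) (hd : Even d) (hx0 : 0 ≤ x)
    (hx : x ^ 2 < 1 - qda d α) :
    |bda d α x * (2 * betada d α x * Tclosed d α x +
        (epsda d α x * bda d α x * (fda d α x / fda d α 0) - bda d α x * Rclosed d α x))| ≤
      (1 / qda d α + 4 / (qda d α ^ 2 * (√(Nda d α) * rda d α x ^ 3)) +
        4 / (qda d α ^ 3 * (1 - qda d α))) * exp (errda d α x) * (√(Nda d α) / rda d α x) := by
  have hα0 := zero_lt_one.trans hα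
  have hq := qda_pos (d := d) hα
  have hq1 := sub_pos.2 (qda_lt_one (d := d) hα0)
  have hν := sqrt_Nda_pos (d := d) hα0
  have hr := rda_pos hx
  have hb := bda_pos hα hx
  rw [abs_mul, abs_of_pos hb]
  calc bda d α x * |2 * betada d α x * Tclosed d α x +
        (epsda d α x * bda d α x * (fda d α x / fda d α 0) - bda d α x * Rclosed d α x)|
      ≤ bda d α x * (2 * |betada d α x| * |Tclosed d α x| +
        (|epsda d α x * bda d α x| * |fda d α x / fda d α 0| + bda d α x * |Rclosed d α x|)) := by
        gcongr
        refine (abs_add_le _ _).trans (add_le_add ?_ ((abs_sub _ _).trans ?_))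
        · rw [abs_mul, abs_mul, abs_two]
        · rw [abs_mul, abs_mul (bda d α x), abs_of_pos hb]
    _ ≤ √(Nda d α) * rda d α x / qda d α * (2 * (1 / (2 * rda d α x ^ 2)) * exp (errda d α x) +
        (4 / (qda d α * √(Nda d α) * rda d α x ^ 5) * exp (errda d α x) +
          √(Nda d α) * rda d α x / qda d α *
            (4 / (qda d α * (1 - qda d α) * (√(Nda d α) * rda d α x ^ 3)) *
              exp (errda d α x)))) := by
        gcongr
        exacts [bda_le_mul_rda_div hα hx, abs_betada_le hα hx, abs_Tclosed_le hα hd hx0 hx,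
          abs_epsda_mul_bda_le hα hx, abs_fda_div_fda_zero_le hα hd hx0 hx,
          bda_le_mul_rda_div hα hx, abs_Rclosed_le hα hd hx0 hx]
    _ = _ := by
        field_simp
        ring

end Remainder

section Taylor

variable {d : ℕ} {α δ κ s x y : ℝ}

/-- A bound for the second derivative of `Rda`, in units of `√N / r`, when `q ∈ [δ, 1 - δ]` and
`κ ≤ √N * r ^ 3`. -/
def curvatureBound (δ κ : ℝ) : ℝ :=
  (1 / δ + 4 / (δ ^ 2 * κ) + 4 / (δ ^ 3 * δ)) * exp (4 / (δ * δ * κ))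

theorem curvatureBound_nonneg (hδ : 0 < δ) (hκ : 0 < κ) : 0 ≤ curvatureBound δ κ := by
  unfold curvatureBound
  positivity

theorem abs_deriv_bda_mul_Tclosed_le_curvatureBound (hα : 1 < α) (hd : Even d) (hδ : 0 < δ)
    (hq : qda d α ∈ Icc δ (1 - δ)) (hx0 : 0 ≤ x) (hx : x ^ 2 < 1 - qda d α) (hκ : 0 < κ)
    (hκr : κ ≤ √(Nda d α) * rda d α x ^ 3) :
    |bda d α x * (2 * betada d α x * Tclosed d α x +
        (epsda d α x * bda d α x * (fda d α x / fda d α 0) - bda d α x * Rclosed d α x))| ≤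
      curvatureBound δ κ * (√(Nda d α) / rda d α x) := by
  have hq0 := qda_pos (d := d) hα
  have hδq : δ ≤ 1 - qda d α := by linarith [hq.2]
  have hr := rda_pos hx
  have herr : errda d α x ≤ 4 / (δ * δ * κ) := by
    refine (errda_le hα hx).trans ?_
    gcongr
    exacts [mul_nonneg hq0.le (hδ.le.trans hδq), hq.1]
  refine (abs_deriv_bda_mul_Tclosed_le hα hd hx0 hx).trans ?_
  unfold curvatureBound
  gcongr
  exacts [hq.1, hq.1, hq.1]

theorem half_rda_le_of_mem_uIcc (hα : 1 < α) (hs0 : 0 ≤ s) (hs : s ^ 2 < 1 - qda d α)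
    (hxs : 4 * |x - s| ≤ rda d α s ^ 2) (hy : y ∈ [[s, x]]) :
    y ^ 2 < 1 - qda d α ∧ rda d α s / 2 ≤ rda d α y := by
  have hys := (abs_sub_left_of_mem_uIcc hy).trans (by linarith : |x - s| ≤ rda d α s ^ 2 / 4)
  have hr := rda_pos hs
  have hr2 := rda_sq hs
  have hq := qda_pos (d := d) hα
  have hsum : |y + s| ≤ 2 := by
    have hs1 : s < 1 := by nlinarith
    obtain ⟨hl, hu⟩ := abs_le.1 hys
    exact abs_le.2 ⟨by nlinarith, by nlinarith⟩
  have hdiff : y ^ 2 - s ^ 2 ≤ rda d α s ^ 2 / 2 := by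
    calc y ^ 2 - s ^ 2 = (y - s) * (y + s) := by ring
      _ ≤ |y - s| * |y + s| := (le_abs_self _).trans_eq (abs_mul _ _)
      _ ≤ rda d α s ^ 2 / 4 * 2 := by gcongr
      _ = rda d α s ^ 2 / 2 := by ring
  exact ⟨by linarith [pow_pos hr 2], le_sqrt_of_sq_le (by linarith)⟩

theorem abs_Rda_sub_sub_le (hα : 1 < α) (hd : Even d) (hδ : 0 < δ)
    (hq : qda d α ∈ Icc δ (1 - δ)) (hs0 : 0 ≤ s) (hs : s ^ 2 < 1 - qda d α) (hκ : 0 < κ)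
    (hκr : 8 * κ ≤ √(Nda d α) * rda d α s ^ 3) (hx0 : 0 ≤ x)
    (hxs : 4 * |x - s| ≤ rda d α s ^ 2) :
    |Rda d α x - Rda d α s - (x - s) * (bda d α s * Tda d α s)| ≤
      2 * curvatureBound δ κ * √(Nda d α) / rda d α s * |x - s| ^ 2 := by
  have hseg : ∀ y ∈ [[s, x]], y ^ 2 < 1 - qda d α ∧ rda d α s / 2 ≤ rda d α y :=
    fun y => half_rda_le_of_mem_uIcc hα hs0 hs hxs
  have hr := rda_pos hs
  have hC := curvatureBound_nonneg hδ hκ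
  have hbound : ∀ y ∈ [[s, x]], ‖bda d α y * (2 * betada d α y * Tclosed d α y +
      (epsda d α y * bda d α y * (fda d α y / fda d α 0) - bda d α y * Rclosed d α y))‖ ≤
        2 * curvatureBound δ κ * √(Nda d α) / rda d α s := by
    intro y hy
    obtain ⟨hy1, hry⟩ := hseg y hy
    have hy0 : 0 ≤ y := (le_min hs0 hx0).trans hy.1
    have hκy : κ ≤ √(Nda d α) * rda d α y ^ 3 := by
      calc κ ≤ √(Nda d α) * (rda d α s / 2) ^ 3 := by linarith
        _ ≤ √(Nda d α) * rda d α y ^ 3 := by gcongr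
    calc _ ≤ curvatureBound δ κ * (√(Nda d α) / rda d α y) :=
          abs_deriv_bda_mul_Tclosed_le_curvatureBound hα hd hδ hq hy0 hy1 hκ hκy
      _ ≤ curvatureBound δ κ * (√(Nda d α) / (rda d α s / 2)) := by gcongr
      _ = _ := by field_simp
  rw [Rda_eq_Rclosed hα hd hx0 (hseg x right_mem_uIcc).1, Rda_eq_Rclosed hα hd hs0 hs,
    Tda_eq_Tclosed hα hd hs0 hs]
  exact norm_sub_sub_smul_le_of_norm_hasDerivAt_le
    (fun y hy => hasDerivAt_Rclosed hα (hseg y hy).1)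
    (fun y hy => hasDerivAt_bda_mul_Tclosed hα (hseg y hy).1) hbound

theorem abs_Rda_sub_div_sub_Tda_le (hα : 1 < α) (hd : Even d) (hδ : 0 < δ)
    (hq : qda d α ∈ Icc δ (1 - δ)) (hs0 : 0 ≤ s) (hs : s ^ 2 < 1 - qda d α) (hκ : 0 < κ)
    (hκr : 8 * κ ≤ √(Nda d α) * rda d α s ^ 3) (hx0 : 0 ≤ x)
    (hxs : 4 * |x - s| ≤ rda d α s ^ 2) (hne : x ≠ s) :
    |(Rda d α x - Rda d α s) / ((x - s) * bda d α s) - Tda d α s| ≤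
      2 * curvatureBound δ κ * |x - s| / rda d α s ^ 2 := by
  have hν := sqrt_Nda_pos (d := d) (zero_lt_one.trans hα)
  have hr := rda_pos hs
  have hb := bda_pos hα hs
  have hxs0 := sub_ne_zero.2 hne
  have hxs' := abs_pos.2 hxs0
  have hC := curvatureBound_nonneg hδ hκ
  have hquot : (Rda d α x - Rda d α s) / ((x - s) * bda d α s) - Tda d α s =
      (Rda d α x - Rda d α s - (x - s) * (bda d α s * Tda d α s)) / ((x - s) * bda d α s) := by
    field_simp
  rw [hquot, abs_div, abs_mul, abs_of_pos hb]
  calc _ ≤ 2 * curvatureBound δ κ * √(Nda d α) / rda d α s * |x - s| ^ 2 /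
        (|x - s| * (√(Nda d α) * rda d α s)) :=
        div_le_div₀ (by positivity) (abs_Rda_sub_sub_le hα hd hδ hq hs0 hs hκ hκr hx0 hxs)
          (by positivity) (mul_le_mul_of_nonneg_left (mul_rda_le_bda hα hs) hxs'.le)
    _ = _ := by field_simp

end Taylor

section Limit

variable {d : ℕ} {α δ : ℝ}

theorem pow_three_le_Nda_mul_rda_maxRoot (hα : 1 < α) (hd : d ≠ 0) (hδ : 0 < δ)
    (hq : qda d α ∈ Icc δ (1 - δ)) : δ ^ 3 ≤ Nda d α * (rda d α (maxRoot α α d) ^ 2) ^ 3 := by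
  rw [rda_sq (maxRoot_sq_lt hα hd)]
  refine le_trans ?_ (qda_sq_mul_le_Nda_mul_maxRoot hα hd)
  have hδq : δ ≤ 1 - qda d α := by linarith [hq.2]
  rw [pow_succ]
  gcongr
  exact hq.1

theorem le_rpow_mul_rda_maxRoot_sq (hα : 1 < α) (hd : d ≠ 0) (hδ : 0 < δ)
    (hq : qda d α ∈ Icc δ (1 - δ)) :
    δ ≤ Nda d α ^ (3 : ℝ)⁻¹ * rda d α (maxRoot α α d) ^ 2 := by
  have hN := Nda_pos (d := d) (zero_lt_one.trans hα)
  refine le_of_pow_le_pow_left₀ three_ne_zero (by positivity) ?_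
  rw [mul_pow, show (3 : ℝ)⁻¹ = ((3 : ℕ) : ℝ)⁻¹ by norm_num,
    rpow_inv_natCast_pow hN.le three_ne_zero]
  exact pow_three_le_Nda_mul_rda_maxRoot hα hd hδ hq

theorem sq_le_sqrt_Nda_mul_rda_maxRoot (hα : 1 < α) (hd : d ≠ 0) (hδ : 0 < δ)
    (hq : qda d α ∈ Icc δ (1 - δ)) : δ ^ 2 ≤ √(Nda d α) * rda d α (maxRoot α α d) ^ 3 := by
  have hN := Nda_pos (d := d) (zero_lt_one.trans hα)
  have hr := rda_pos (maxRoot_sq_lt hα hd)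
  have hδ1 : δ ≤ 1 := by linarith [hq.1, hq.2]
  refine le_of_pow_le_pow_left₀ two_ne_zero (by positivity) ?_
  calc (δ ^ 2) ^ 2 = δ ^ 3 * δ := by ring
    _ ≤ δ ^ 3 := mul_le_of_le_one_right (by positivity) hδ1
    _ ≤ Nda d α * (rda d α (maxRoot α α d) ^ 2) ^ 3 :=
      pow_three_le_Nda_mul_rda_maxRoot hα hd hδ hq
    _ = (√(Nda d α) * rda d α (maxRoot α α d) ^ 3) ^ 2 := by
      rw [mul_pow, sq_sqrt hN.le]
      ring

theorem abs_Rda_sub_maxRoot_div_sub_Tda_le {x : ℝ} (hα : 1 < α) (hd : Even d) (hd0 : d ≠ 0)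
    (hδ : 0 < δ) (hq : qda d α ∈ Icc δ (1 - δ)) (hx0 : 0 ≤ x) (hne : x ≠ maxRoot α α d)
    (hxs : Nda d α ^ (3 : ℝ)⁻¹ * |x - maxRoot α α d| ≤ δ / 4) :
    |(Rda d α x - Rda d α (maxRoot α α d)) /
          ((x - maxRoot α α d) * bda d α (maxRoot α α d)) - Tda d α (maxRoot α α d)| ≤
      2 * curvatureBound δ (δ ^ 2 / 8) / δ * (Nda d α ^ (3 : ℝ)⁻¹ * |x - maxRoot α α d|) := by
  have hN := rpow_pos_of_pos (Nda_pos (d := d) (zero_lt_one.trans hα)) (3 : ℝ)⁻¹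
  have hs := maxRoot_sq_lt hα hd0
  have hκ : 0 < δ ^ 2 / 8 := by positivity
  have hC := curvatureBound_nonneg hδ hκ
  have hδr := le_rpow_mul_rda_maxRoot_sq hα hd0 hδ hq
  have hκr := sq_le_sqrt_Nda_mul_rda_maxRoot hα hd0 hδ hq
  refine (abs_Rda_sub_div_sub_Tda_le hα hd hδ hq (maxRoot_nonneg (by linarith) hd0) hs hκ
    (by linarith) hx0 (le_of_mul_le_mul_left (by linarith) hN) hne).trans ?_
  calc 2 * curvatureBound δ (δ ^ 2 / 8) * |x - maxRoot α α d| / rda d α (maxRoot α α d) ^ 2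
      = 2 * curvatureBound δ (δ ^ 2 / 8) * (Nda d α ^ (3 : ℝ)⁻¹ * |x - maxRoot α α d|) /
        (Nda d α ^ (3 : ℝ)⁻¹ * rda d α (maxRoot α α d) ^ 2) := by
        rw [mul_left_comm, mul_div_mul_left _ _ hN.ne']
    _ ≤ 2 * curvatureBound δ (δ ^ 2 / 8) * (Nda d α ^ (3 : ℝ)⁻¹ * |x - maxRoot α α d|) / δ := by
        gcongr
    _ = _ := by ring

theorem remainder_taylor_at_max_root_general {ι : Type*} {l : Filter ι} {d : ι → ℕ} {α x : ι → ℝ}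
    (hδ : 0 < δ) (hd : ∀ i, Even (d i)) (hd0 : ∀ i, d i ≠ 0) (hα : ∀ i, 1 < α i)
    (hq : ∀ᶠ i in l, qda (d i) (α i) ∈ Icc δ (1 - δ)) (hx0 : ∀ i, 0 ≤ x i)
    (hne : ∀ i, x i ≠ maxRoot (α i) (α i) (d i))
    (hxs : Tendsto (fun i => Nda (d i) (α i) ^ (3 : ℝ)⁻¹ * |x i - maxRoot (α i) (α i) (d i)|)
      l (𝓝 0)) :
    Tendsto (fun i =>
        (Rda (d i) (α i) (x i) - Rda (d i) (α i) (maxRoot (α i) (α i) (d i))) /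
            ((x i - maxRoot (α i) (α i) (d i)) *
              bda (d i) (α i) (maxRoot (α i) (α i) (d i))) -
          Tda (d i) (α i) (maxRoot (α i) (α i) (d i)))
      l (𝓝 0) := by
  have hlim := hxs.const_mul (2 * curvatureBound δ (δ ^ 2 / 8) / δ)
  rw [mul_zero] at hlim
  refine squeeze_zero_norm' ?_ hlim
  filter_upwards [hq, hxs.eventually_le_const (by positivity : 0 < δ / 4)] with i hqi hxi
  exact abs_Rda_sub_maxRoot_div_sub_Tda_le (hα i) (hd i) (hd0 i) hδ hqi (hx0 i) (hne i) hxi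

end Limit

section LinearGrowth

variable {d : ℕ → ℕ} {α : ℕ → ℝ} {c₁ c₂ : ℝ}

theorem tendsto_Nda_div_sq (hd : Tendsto (fun n : ℕ => (d n : ℝ) / n) atTop (𝓝 c₁))
    (hα : Tendsto (fun n : ℕ => α n / n) atTop (𝓝 c₂)) :
    Tendsto (fun n : ℕ => Nda (d n) (α n) / (n : ℝ) ^ 2) atTop (𝓝 ((c₁ + c₂) ^ 2)) := by
  have hsum := hd.add hα
  have hlim := hsum.mul (hsum.add (tendsto_one_div_atTop_nhds_zero_nat (𝕜 := ℝ)))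
  rw [add_zero, ← sq] at hlim
  refine hlim.congr fun n => ?_
  rw [Nda]
  ring

theorem tendsto_qda (hc : c₁ + c₂ ≠ 0)
    (hd : Tendsto (fun n : ℕ => (d n : ℝ) / n) atTop (𝓝 c₁))
    (hα : Tendsto (fun n : ℕ => α n / n) atTop (𝓝 c₂)) :
    Tendsto (fun n => qda (d n) (α n)) atTop (𝓝 (c₂ ^ 2 / (c₁ + c₂) ^ 2)) := by
  have hnum := (hα.pow 2).sub ((tendsto_one_div_atTop_nhds_zero_nat (𝕜 := ℝ)).pow 2)
  have hlim := hnum.div (tendsto_Nda_div_sq hd hα) (pow_ne_zero 2 hc)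
  rw [zero_pow two_ne_zero, sub_zero] at hlim
  refine hlim.congr' ?_
  filter_upwards [eventually_ne_atTop 0] with n hn
  have hn' : (n : ℝ) ≠ 0 := Nat.cast_ne_zero.2 hn
  rw [Pi.div_apply, div_pow, div_pow, one_pow, ← sub_div,
    div_div_div_cancel_right₀ (pow_ne_zero 2 hn'), qda, Nda]

theorem exists_eventually_qda_mem_Icc (hc₁ : 0 < c₁) (hc₂ : 0 < c₂)
    (hd : Tendsto (fun n : ℕ => (d n : ℝ) / n) atTop (𝓝 c₁))
    (hα : Tendsto (fun n : ℕ => α n / n) atTop (𝓝 c₂)) :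
    ∃ δ > 0, ∀ᶠ n in atTop, qda (d n) (α n) ∈ Icc δ (1 - δ) := by
  have hlim := tendsto_qda (add_pos hc₁ hc₂).ne' hd hα
  have hpos : 0 < c₂ ^ 2 / (c₁ + c₂) ^ 2 := by positivity
  have hlt : c₂ ^ 2 / (c₁ + c₂) ^ 2 < 1 := (div_lt_one (by positivity)).2 (by gcongr; linarith)
  generalize c₂ ^ 2 / (c₁ + c₂) ^ 2 = q at *
  obtain ⟨δ, hδ, hδq⟩ := exists_between (lt_min hpos (sub_pos.2 hlt))
  obtain ⟨hδq0, hδq1⟩ := lt_min_iff.1 hδq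
  exact ⟨δ, hδ, hlim.eventually (Icc_mem_nhds hδq0 (by linarith))⟩

theorem tendsto_Nda_rpow_mul {y : ℕ → ℝ} (hα0 : ∀ n, 0 < α n)
    (hd : Tendsto (fun n : ℕ => (d n : ℝ) / n) atTop (𝓝 c₁))
    (hα : Tendsto (fun n : ℕ => α n / n) atTop (𝓝 c₂))
    (hy : Tendsto (fun n : ℕ => (n : ℝ) ^ ((2 : ℝ) / 3) * y n) atTop (𝓝 0)) :
    Tendsto (fun n => Nda (d n) (α n) ^ (3 : ℝ)⁻¹ * y n) atTop (𝓝 0) := by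
  have hlim := ((tendsto_Nda_div_sq hd hα).rpow_const (p := (3 : ℝ)⁻¹)
    (Or.inr (by norm_num))).mul hy
  rw [mul_zero] at hlim
  refine hlim.congr' ?_
  filter_upwards [eventually_gt_atTop 0] with n hn
  have hn' : (0 : ℝ) < n := Nat.cast_pos.2 hn
  have hpow : ((n : ℝ) ^ 2) ^ (3 : ℝ)⁻¹ = (n : ℝ) ^ ((2 : ℝ) / 3) := by
    rw [← rpow_natCast_mul hn'.le]
    norm_num [div_eq_mul_inv]
  rw [div_rpow (Nda_pos (hα0 n)).le (sq_nonneg _), hpow, ← mul_assoc,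
    div_mul_cancel₀ _ (rpow_pos_of_pos hn' _).ne']

end LinearGrowth

/-- First-order behaviour of the remainder `R_{d,α}` near the largest
Jacobi root `s' = t_{1,d}^{α,α}`:
`R(x) - R(s') = (x - s')·b(s')·(T(s') + o(1))` when `|x - s'| = o(n^{-2/3})`. -/
theorem remainder_taylor_at_max_root
    (ρ c₁ c₂ : ℝ) (hρ : 0 < ρ) (hc₁ : 0 < c₁) (hc₂ : 0 < c₂)
    (d : ℕ → ℕ) (α : ℕ → ℝ) (x : ℕ → ℝ)
    (hde : ∀ n, Even (d n)) (hd2 : ∀ n, 2 ≤ d n)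
    (hα : ∀ n, Real.sqrt (7 / 6) ≤ α n)
    (hdc : Tendsto (fun n : ℕ => (d n : ℝ) / n) atTop (nhds c₁))
    (hαc : Tendsto (fun n : ℕ => α n / n) atTop (nhds c₂))
    (hαd : Tendsto (fun n : ℕ => α n / (d n : ℝ)) atTop (nhds (1 / (2 * ρ))))
    (hx : ∀ n, x n ∈ Set.Icc (0 : ℝ) (Real.sqrt (1 - qda (d n) (α n))))
    (hxne : ∀ n, x n ≠ maxRoot (α n) (α n) (d n))
    (hxc : Tendsto (fun n : ℕ => (n : ℝ) ^ ((2 : ℝ) / 3) * |x n - maxRoot (α n) (α n) (d n)|)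
      atTop (nhds 0)) :
    Tendsto (fun n : ℕ =>
        (Rda (d n) (α n) (x n) - Rda (d n) (α n) (maxRoot (α n) (α n) (d n))) /
            ((x n - maxRoot (α n) (α n) (d n)) *
              bda (d n) (α n) (maxRoot (α n) (α n) (d n))) -
          Tda (d n) (α n) (maxRoot (α n) (α n) (d n)))
      atTop (nhds 0) := by
  have hα1 : ∀ n, 1 < α n := fun n => (lt_sqrt_of_sq_lt (by norm_num)).trans_le (hα n)
  obtain ⟨δ, hδ, hq⟩ := exists_eventually_qda_mem_Icc hc₁ hc₂ hdc hαc
  exact remainder_taylor_at_max_root_general hδ hde (fun n => by linarith [hd2 n]) hα1 hq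
    (fun n => (hx n).1) hxne (tendsto_Nda_rpow_mul (fun n => zero_lt_one.trans (hα1 n)) hdc hαc hxc)
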